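/- arXiv:math/0311076 — 3 statements merged into one kernel-verified Lean document; each statement's English description precedes it below -/
import Mathlib

section
/- Let M be a Coxeter matrix on a countably infinite type S with M s t ≥ 3 or M s t = 0 (encoding ∞) for all s ≠ t, let (W, cs) be the associated Coxeter system, and fix an injective enumeration s : ℕ → S of the generators. Then for every k ∈ ℕ, the normalized moment N^{-k/2} · #{(i_1, …, i_k) ∈ {0, …, N-1}^k : cs.simple (s i_1) · … · cs.simple (s i_k) = 1 in W} converges, as N → ∞, to 0 if k is odd and to the Catalan number C_n = (1/(n+1))·binom(2n, n) if k = 2n is even. -/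
open Filter Topology

/-! A word in which some letter occurs exactly once acts nontrivially in the geometric
representation, so every letter of a trivial word occurs at least twice. In a trivial word using
each letter at most twice, an innermost repetition `a u a` must have `u` empty: otherwise `u` sends
the simple root of `a` to a positive combination with strictly positive coordinates along `u`,
which contradicts triviality because no letter of `u` commutes with `a`. Deleting `a a` and
iterating shows that the word comes from a noncrossing pairing. All other trivial words have fewer
than `k / 2` distinct letters, hence number `O(N ^ ((k - 1) / 2))`, while the noncrossing words are
given by a binary tree with `k / 2` nodes together with a labelling of these nodes, which is unique
when the labels are distinct. -/

namespace CoxeterCLT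

section Reflections

variable {V : Type*} [AddCommGroup V] [Module ℝ V] {x y : V} {f g : Module.Dual ℝ V}

lemma reflection_mul_reflection_sq_eq_one (hf : f x = 2) (hg : g y = 2) (hfy : f y = 0)
    (hgx : g x = 0) : (Module.reflection hf * Module.reflection hg) ^ 2 = 1 := by
  ext z
  simp only [pow_two, LinearEquiv.mul_apply, Module.reflection_apply, map_sub, map_smul, hf, hg,
    hfy, hgx, LinearEquiv.coe_one, id_eq]
  module

lemma chebyshevS_eval_two_mul_cos {θ : ℝ} (hθ : Real.sin θ ≠ 0) (n : ℤ) :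
    (Polynomial.Chebyshev.S ℝ n).eval (2 * Real.cos θ) = Real.sin ((n + 1) * θ) / Real.sin θ := by
  rw [eq_div_iff hθ, Polynomial.Chebyshev.S_two_mul_real_cos]

lemma reflection_mul_reflection_pow_eq_one {m : ℕ} (hm : 3 ≤ m) (hf : f x = 2) (hg : g y = 2)
    (hfg : f y * g x = 4 * Real.cos (Real.pi / m) ^ 2) :
    (Module.reflection hf * Module.reflection hg) ^ m = 1 := by
  have hm' : (3 : ℝ) ≤ m := by exact_mod_cast hm
  -- The product is a rotation by `θ`.
  set θ : ℝ := 2 * Real.pi / m with hθ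
  have hmθ : m * θ = 2 * Real.pi := by rw [hθ]; field_simp
  have hsin : Real.sin θ ≠ 0 := by
    refine (Real.sin_pos_of_pos_of_lt_pi (by positivity) ?_).ne'
    rw [hθ, div_lt_iff₀ (by positivity)]
    nlinarith [Real.pi_pos]
  have ht : 2 * Real.cos θ = f y * g x - 2 := by
    rw [hfg, hθ, mul_div_assoc, Real.cos_two_mul]
    ring
  ext z
  rw [Module.reflection_mul_reflection_pow_apply hf hg m z _ ht]
  rcases Nat.even_or_odd' m with ⟨k, rfl | rfl⟩
  · have hS : (Polynomial.Chebyshev.S ℝ (k - 1 : ℤ)).eval (2 * Real.cos θ) = 0 := by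
      have hkθ : ((k - 1 : ℤ) + 1 : ℝ) * θ = Real.pi := by push_cast at hmθ ⊢; linarith
      rw [chebyshevS_eval_two_mul_cos hsin, hkθ, Real.sin_pi, zero_div]
    rw [show ((2 * k : ℕ) - 2 : ℤ) / 2 = k - 1 by lia,
      show ((2 * k : ℕ) - 1 : ℤ) / 2 = k - 1 by lia, hS]
    simp
  · have hS : (Polynomial.Chebyshev.S ℝ (k : ℤ)).eval (2 * Real.cos θ) +
        (Polynomial.Chebyshev.S ℝ (k - 1 : ℤ)).eval (2 * Real.cos θ) = 0 := by
      have hkθ : ((k : ℤ) + 1 : ℝ) * θ = 2 * Real.pi - ((k - 1 : ℤ) + 1 : ℝ) * θ := by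
        push_cast at hmθ ⊢; linarith
      rw [chebyshevS_eval_two_mul_cos hsin, chebyshevS_eval_two_mul_cos hsin, hkθ,
        Real.sin_two_pi_sub]
      ring
    rw [show ((2 * k + 1 : ℕ) - 2 : ℤ) / 2 = k - 1 by lia,
      show ((2 * k + 1 : ℕ) - 1 : ℤ) / 2 = k by lia,
      show ((2 * k + 1 : ℕ) - 3 : ℤ) / 2 = k - 1 by lia,
      show ((2 * k + 1 : ℕ) : ℤ) / 2 = k by lia, hS]
    simp

end Reflections

section CosPiDiv

lemma pi_div_natCast_le_pi_div {m n : ℕ} (hn : 0 < n) (h : n ≤ m) :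
    Real.pi / m ≤ Real.pi / n := by
  gcongr

-- For `m = 0`, which encodes `∞`, the convention `π / 0 = 0` gives the correct value `cos 0 = 1`.
lemma cos_pi_div_natCast_nonneg {m : ℕ} (h₁ : m ≠ 1) : 0 ≤ Real.cos (Real.pi / m) := by
  rcases Nat.eq_zero_or_pos m with rfl | hm
  · simp
  have hpos : 0 ≤ Real.pi / m := by positivity
  have hle : Real.pi / m ≤ Real.pi / (2 : ℕ) := pi_div_natCast_le_pi_div two_pos (by lia)
  push_cast at hle
  exact Real.cos_nonneg_of_neg_pi_div_two_le_of_le (by linarith [Real.pi_pos]) hle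

lemma cos_pi_div_natCast_pos {m : ℕ} (h₁ : m ≠ 1) (h₂ : m ≠ 2) :
    0 < Real.cos (Real.pi / m) := by
  rcases Nat.eq_zero_or_pos m with rfl | hm
  · simp
  have hpos : 0 ≤ Real.pi / m := by positivity
  have hle : Real.pi / m ≤ Real.pi / (3 : ℕ) := pi_div_natCast_le_pi_div three_pos (by lia)
  push_cast at hle
  exact Real.cos_pos_of_mem_Ioo ⟨by linarith [Real.pi_pos], by linarith [Real.pi_pos]⟩

end CosPiDiv

section GeometricRepresentation

variable {S : Type*} (M : CoxeterMatrix S)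

/-- The linear form `2 B(e_a, ·)` on `S →₀ ℝ`, where `B(e_a, e_b) = -cos (π / M a b)` is the
canonical bilinear form of the Coxeter matrix `M`. Since `π / 0 = 0`, an infinite label `M a b = 0`
contributes `B(e_a, e_b) = -1`, as it should. -/
noncomputable def simpleCoroot (a : S) : Module.Dual ℝ (S →₀ ℝ) :=
  Finsupp.linearCombination ℝ fun b => -2 * Real.cos (Real.pi / M a b)

lemma simpleCoroot_single (a b : S) :
    simpleCoroot M a (Finsupp.single b 1) = -2 * Real.cos (Real.pi / M a b) := by
  simp [simpleCoroot]

lemma simpleCoroot_single_self (a : S) : simpleCoroot M a (Finsupp.single a 1) = 2 := by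
  simp [simpleCoroot_single]

variable {M} in
lemma simpleCoroot_neg {a b : S} {v : S →₀ ℝ} (hv : 0 ≤ v) (ha : v a = 0) (hb : 0 < v b)
    (hab : M a b ≠ 2) : simpleCoroot M a v < 0 := by
  rw [simpleCoroot, Finsupp.linearCombination_apply, Finsupp.sum]
  refine Finset.sum_neg' (fun t _ => ?_) ⟨b, by simpa using hb.ne', ?_⟩
  · rcases eq_or_ne a t with rfl | hat
    · simp [ha]
    · have := mul_nonneg (hv t) (cos_pi_div_natCast_nonneg (M.off_diagonal a t hat))
      simp only [smul_eq_mul]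
      linarith
  · have hne : a ≠ b := by rintro rfl; exact hb.ne' ha
    have := mul_pos hb (cos_pi_div_natCast_pos (M.off_diagonal a b hne) hab)
    simp only [smul_eq_mul]
    linarith

/-- The reflection of the geometric representation attached to the generator `a`, which sends the
simple root `Finsupp.single a 1` to its opposite. -/
noncomputable def simpleReflection (a : S) : (S →₀ ℝ) ≃ₗ[ℝ] (S →₀ ℝ) :=
  Module.reflection (simpleCoroot_single_self M a)

lemma simpleReflection_apply_self (a : S) (v : S →₀ ℝ) :
    simpleReflection M a v a = v a - simpleCoroot M a v := by
  simp [simpleReflection, Module.reflection_apply]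

lemma simpleReflection_apply_of_ne {a b : S} (h : b ≠ a) (v : S →₀ ℝ) :
    simpleReflection M a v b = v b := by
  simp [simpleReflection, Module.reflection_apply, Finsupp.single_eq_of_ne h]

lemma simpleReflection_single_self (a : S) :
    simpleReflection M a (Finsupp.single a 1) = -Finsupp.single a 1 :=
  Module.reflection_apply_self _

lemma isLiftable_simpleReflection : M.IsLiftable (simpleReflection M) := by
  intro a b
  rcases eq_or_ne a b with rfl | hab
  · ext1 v
    simp [simpleReflection, Module.involutive_reflection _ _]
  have hoff := M.off_diagonal a b hab
  obtain h | h | h : M a b = 0 ∨ M a b = 2 ∨ 3 ≤ M a b := by lia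
  · rw [h, pow_zero]
  · rw [h]
    apply reflection_mul_reflection_sq_eq_one <;> simp [simpleCoroot_single, M.symmetric b a, h]
  · apply reflection_mul_reflection_pow_eq_one h
    rw [simpleCoroot_single, simpleCoroot_single, M.symmetric b a]
    ring

variable {M} {W : Type*} [Group W] (cs : CoxeterSystem M W)

/-- The geometric representation of a Coxeter group on the space spanned by its simple roots. -/
noncomputable def geometricRep : W →* ((S →₀ ℝ) ≃ₗ[ℝ] (S →₀ ℝ)) :=
  cs.lift ⟨simpleReflection M, isLiftable_simpleReflection M⟩

lemma geometricRep_simple (a : S) : geometricRep cs (cs.simple a) = simpleReflection M a :=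
  cs.lift_apply_simple (isLiftable_simpleReflection M) a

lemma geometricRep_wordProd_cons (a : S) (w : List S) (v : S →₀ ℝ) :
    geometricRep cs (cs.wordProd (a :: w)) v =
      simpleReflection M a (geometricRep cs (cs.wordProd w) v) := by
  rw [cs.wordProd_cons, map_mul, geometricRep_simple, LinearEquiv.mul_apply]

lemma geometricRep_wordProd_apply_of_notMem {a : S} {w : List S} (ha : a ∉ w) (v : S →₀ ℝ) :
    geometricRep cs (cs.wordProd w) v a = v a := by
  induction w with
  | nil => simp
  | cons b w ih =>
    rw [List.mem_cons, not_or] at ha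
    rw [geometricRep_wordProd_cons, simpleReflection_apply_of_ne _ ha.1, ih ha.2]

lemma geometricRep_wordProd_apply_of_append_eq_one {a : S} {x w y : List S} (hx : a ∉ x)
    (hy : a ∉ y) (h : cs.wordProd (x ++ w ++ y) = 1) (v : S →₀ ℝ) :
    geometricRep cs (cs.wordProd w) v a = v a := by
  have hw : cs.wordProd w = cs.wordProd (x.reverse ++ y.reverse) := by
    rw [cs.wordProd_append, cs.wordProd_append, mul_eq_one_iff_eq_inv] at h
    rw [cs.wordProd_append, cs.wordProd_reverse, cs.wordProd_reverse, ← h, inv_mul_cancel_left]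
  rw [hw, geometricRep_wordProd_apply_of_notMem cs (by simp [hx, hy])]

lemma geometricRep_wordProd_single_nonneg_and_pos {a : S} {u : List S} (hu : (a :: u).Nodup)
    (hM : ∀ b ∈ u, M a b ≠ 2) :
    0 ≤ geometricRep cs (cs.wordProd u) (Finsupp.single a 1) ∧
      ∀ b ∈ u, 0 < geometricRep cs (cs.wordProd u) (Finsupp.single a 1) b := by
  induction u with
  | nil => simp
  | cons b u ih =>
    rw [List.nodup_cons, List.mem_cons, not_or, List.nodup_cons] at hu
    obtain ⟨⟨hab, hau⟩, hbu, hu⟩ := hu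
    obtain ⟨hnonneg, hpos⟩ :=
      ih (List.nodup_cons.2 ⟨hau, hu⟩) fun c hc => hM c (List.mem_cons_of_mem _ hc)
    have hb := geometricRep_wordProd_apply_of_notMem cs hbu (Finsupp.single a 1)
    have ha := geometricRep_wordProd_apply_of_notMem cs hau (Finsupp.single a 1)
    rw [Finsupp.single_eq_of_ne (Ne.symm hab)] at hb
    rw [Finsupp.single_eq_same] at ha
    have hcoroot := simpleCoroot_neg hnonneg hb (ha ▸ one_pos)
      (M.symmetric a b ▸ hM b List.mem_cons_self)
    have hpos_b : 0 < geometricRep cs (cs.wordProd (b :: u)) (Finsupp.single a 1) b := by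
      rw [geometricRep_wordProd_cons, simpleReflection_apply_self, hb]
      linarith
    refine ⟨fun c => ?_, fun c hc => ?_⟩ <;> rcases eq_or_ne c b with rfl | hcb
    · exact hpos_b.le
    · rw [geometricRep_wordProd_cons, simpleReflection_apply_of_ne _ hcb]
      exact hnonneg c
    · exact hpos_b
    · rw [geometricRep_wordProd_cons, simpleReflection_apply_of_ne _ hcb]
      exact hpos c ((List.mem_cons.1 hc).resolve_left hcb)

-- The coordinate in question is `⟨a^∨, q⟩ - 1` with `q` the image of the root of `a` under `u`;
-- here `⟨a^∨, q⟩ < 2`, since `q` exceeds that root by a combination of roots of letters of `u`.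
lemma geometricRep_wordProd_conj_apply_lt_one {a : S} {u : List S} (hu : (a :: u).Nodup)
    (hne : u ≠ []) (hM : ∀ b ∈ u, M a b ≠ 2) :
    geometricRep cs (cs.wordProd (a :: (u ++ [a]))) (Finsupp.single a 1) a < 1 := by
  classical
  obtain ⟨hnonneg, hpos⟩ := geometricRep_wordProd_single_nonneg_and_pos cs hu hM
  have hau : a ∉ u := (List.nodup_cons.1 hu).1
  have ha := geometricRep_wordProd_apply_of_notMem cs hau (Finsupp.single a 1)
  rw [Finsupp.single_eq_same] at ha
  rw [geometricRep_wordProd_cons, cs.wordProd_append, map_mul, LinearEquiv.mul_apply,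
    cs.wordProd_singleton, geometricRep_simple, simpleReflection_single_self, map_neg,
    simpleReflection_apply_self]
  set q := geometricRep cs (cs.wordProd u) (Finsupp.single a 1)
  obtain ⟨b, hb⟩ := List.exists_mem_of_ne_nil u hne
  have hba : b ≠ a := by rintro rfl; exact hau hb
  have hq : simpleCoroot M a (q - Finsupp.single a 1) < 0 := by
    refine simpleCoroot_neg (b := b) (fun t => ?_) (by simp [ha]) ?_ (hM b hb)
    · rcases eq_or_ne t a with rfl | hta
      · simp [ha]
      · simpa [Finsupp.single_eq_of_ne hta] using hnonneg t
    · simpa [Finsupp.single_eq_of_ne hba] using hpos b hb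
  rw [map_sub, simpleCoroot_single_self] at hq
  rw [Finsupp.neg_apply, map_neg, ha]
  linarith

end GeometricRepresentation

/-- Words obtained by labelling the blocks of a noncrossing pairing of their positions; different
blocks may carry the same label. In `a :: (l ++ a :: r)` the first position is paired with the
displayed second occurrence of `a`. -/
inductive IsNoncrossing {α : Type*} : List α → Prop
  | nil : IsNoncrossing []
  | node (a : α) {l r : List α} (hl : IsNoncrossing l) (hr : IsNoncrossing r) :
      IsNoncrossing (a :: (l ++ a :: r))

namespace IsNoncrossing

variable {α β : Type*} {w : List α}

protected lemma map (f : α → β) (h : IsNoncrossing w) : IsNoncrossing (w.map f) := by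
  induction h with
  | nil => exact .nil
  | node a _ _ ihl ihr => simpa using IsNoncrossing.node (f a) ihl ihr

lemma of_map {f : α → β} (hf : Function.Injective f) (h : IsNoncrossing (w.map f)) :
    IsNoncrossing w := by
  cases isEmpty_or_nonempty α
  · rw [Subsingleton.elim w []]
    exact .nil
  · obtain ⟨g, hg⟩ := hf.hasLeftInverse
    simpa [hg.comp_eq_id] using h.map g

lemma insert_pair (a : α) {x y : List α} (h : IsNoncrossing (x ++ y)) :
    IsNoncrossing (x ++ a :: a :: y) := by
  generalize hw : x ++ y = w at h
  induction h generalizing x y with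
  | nil =>
    obtain ⟨rfl, rfl⟩ := List.append_eq_nil_iff.1 hw
    exact .node a .nil .nil
  | @node b l r hl hr ihl ihr =>
    rcases List.append_eq_cons_iff.1 hw with ⟨rfl, rfl⟩ | ⟨x, rfl, hxy⟩
    · exact .node a .nil (.node b hl hr)
    rcases List.append_eq_append_iff.1 hxy.symm with ⟨z, rfl, rfl⟩ | ⟨z, rfl, hz⟩
    · simpa using IsNoncrossing.node b (ihl rfl) hr
    rcases List.cons_eq_append_iff.1 hz with ⟨rfl, rfl⟩ | ⟨z, rfl, rfl⟩
    · simpa using IsNoncrossing.node b (ihl (List.append_nil l)) hr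
    · simpa using IsNoncrossing.node b hl (ihr rfl)

lemma wordProd_eq_one {S W : Type*} [Group W] {M : CoxeterMatrix S} (cs : CoxeterSystem M W)
    {w : List S} (h : IsNoncrossing w) : cs.wordProd w = 1 := by
  induction h with
  | nil => exact cs.wordProd_nil
  | node a _ _ ihl ihr => simp [cs.wordProd_cons, cs.wordProd_append, ihl, ihr]

end IsNoncrossing

section TrivialWords

lemma exists_eq_append_of_not_nodup {α : Type*} {w : List α} (h : ¬ w.Nodup) :
    ∃ x a u y, w = x ++ a :: (u ++ a :: y) ∧ (a :: u).Nodup := by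
  induction w with
  | nil => exact absurd List.nodup_nil h
  | cons b w ih =>
    by_cases hw : w.Nodup
    · have hb : b ∈ w := by simpa [hw] using h
      obtain ⟨u, y, rfl⟩ := List.append_of_mem hb
      exact ⟨[], b, u, y, rfl, (List.nodup_middle.1 hw).sublist (by simp)⟩
    · obtain ⟨x, a, u, y, rfl, hu⟩ := ih hw
      exact ⟨b :: x, a, u, y, rfl, hu⟩

variable {S W : Type*} [DecidableEq S] [Group W] {M : CoxeterMatrix S} (cs : CoxeterSystem M W)

lemma two_le_count_of_wordProd_eq_one {w : List S} (h : cs.wordProd w = 1) {a : S} (ha : a ∈ w) :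
    2 ≤ w.count a := by
  by_contra! hlt
  obtain ⟨x, y, rfl⟩ := List.append_of_mem ha
  rw [List.count_append, List.count_cons_self] at hlt
  have hx : a ∉ x := List.count_eq_zero.1 (by lia)
  have hy : a ∉ y := List.count_eq_zero.1 (by lia)
  have hfix := geometricRep_wordProd_apply_of_append_eq_one cs (w := [a]) hx hy (by simpa using h)
    (Finsupp.single a 1)
  rw [cs.wordProd_singleton, geometricRep_simple, simpleReflection_single_self] at hfix
  norm_num at hfix

lemma isNoncrossing_of_wordProd_eq_one {w : List S} (h : cs.wordProd w = 1)
    (hcount : ∀ a, w.count a ≤ 2) (hM : {a | a ∈ w}.Pairwise fun a b => M a b ≠ 2) :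
    IsNoncrossing w := by
  induction hn : w.length using Nat.strong_induction_on generalizing w with
  | _ n ih =>
  subst hn
  rcases eq_or_ne w [] with rfl | hne
  · exact .nil
  have hnodup : ¬ w.Nodup := by
    obtain ⟨a, ha⟩ := List.exists_mem_of_ne_nil w hne
    have := two_le_count_of_wordProd_eq_one cs h ha
    exact fun hw => by linarith [List.nodup_iff_count_le_one.1 hw a]
  obtain ⟨x, a, u, y, rfl, hu⟩ := exists_eq_append_of_not_nodup hnodup
  have ha := hcount a
  simp only [List.count_append, List.count_cons_self] at ha
  have hx : a ∉ x := List.count_eq_zero.1 (by lia)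
  have hy : a ∉ y := List.count_eq_zero.1 (by lia)
  obtain rfl : u = [] := by
    by_contra hu_ne
    have hau : a ∉ u := (List.nodup_cons.1 hu).1
    refine (geometricRep_wordProd_conj_apply_lt_one cs hu hu_ne fun b hb => ?_).ne ?_
    · exact hM (by simp) (by simp [hb]) (by rintro rfl; exact hau hb)
    · rw [geometricRep_wordProd_apply_of_append_eq_one cs hx hy (by simpa using h),
        Finsupp.single_eq_same]
  refine .insert_pair a (ih _ (by simp) ?_ (fun b => ?_) (hM.mono fun b hb => ?_) rfl)
  · simpa [cs.wordProd_append, cs.wordProd_cons] using h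
  · refine le_trans (List.Sublist.count_le _ ?_) (hcount b)
    simp
  · simp only [Set.mem_ofPred_eq, List.mem_append] at hb
    simp only [Set.mem_ofPred_eq, List.mem_append, List.mem_cons]
    tauto

lemma isNoncrossing_or_two_mul_card_toFinset_lt_length {w : List S} (h : cs.wordProd w = 1)
    (hM : {a | a ∈ w}.Pairwise fun a b => M a b ≠ 2) :
    IsNoncrossing w ∨ 2 * w.toFinset.card < w.length := by
  by_cases hcount : ∀ a, w.count a ≤ 2
  · exact .inl (isNoncrossing_of_wordProd_eq_one cs h hcount hM)
  push Not at hcount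
  obtain ⟨a, ha⟩ := hcount
  have ha_mem : a ∈ w.toFinset := List.mem_toFinset.2 (List.count_pos_iff.1 (by lia))
  refine .inr ?_
  calc 2 * w.toFinset.card = ∑ _b ∈ w.toFinset, 2 := by simp [mul_comm]
    _ < ∑ b ∈ w.toFinset, w.count b := Finset.sum_lt_sum
        (fun b hb => two_le_count_of_wordProd_eq_one cs h (List.mem_toFinset.1 hb))
        ⟨a, ha_mem, ha⟩
    _ = w.length := List.sum_toFinset_count_eq_length w

end TrivialWords

section Counting

variable {α : Type*}

/-- The word of the noncrossing pairing encoded by a binary tree `t`, where `f` labels the nodes of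
`t` in preorder: the left subtree of a node is enclosed by the pair of that node, the right subtree
follows it. -/
def pairingWord : (t : BinaryTree Unit) → (Fin t.numNodes → α) → List α
  | .nil, _ => []
  | .node _ l r, (f : Fin (l.numNodes + r.numNodes + 1) → α) =>
    f 0 :: (pairingWord l (fun i => f (i.castAdd r.numNodes).succ) ++
      f 0 :: pairingWord r (fun i => f (i.natAdd l.numNodes).succ))

lemma length_pairingWord (t : BinaryTree Unit) (f : Fin t.numNodes → α) :
    (pairingWord t f).length = 2 * t.numNodes := by
  induction t with
  | nil => rfl
  | node _ l r ihl ihr =>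
    simp only [pairingWord, List.length_cons, List.length_append, ihl, ihr, BinaryTree.numNodes]
    ring

lemma isNoncrossing_pairingWord (t : BinaryTree Unit) (f : Fin t.numNodes → α) :
    IsNoncrossing (pairingWord t f) := by
  induction t with
  | nil => exact .nil
  | node _ l r ihl ihr => exact .node _ (ihl _) (ihr _)

lemma IsNoncrossing.exists_pairingWord_eq {w : List α} (h : IsNoncrossing w) :
    ∃ t f, pairingWord t f = w := by
  induction h with
  | nil => exact ⟨.nil, Fin.elim0, rfl⟩
  | node a _ _ ihl ihr =>
    obtain ⟨l, f, rfl⟩ := ihl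
    obtain ⟨r, g, rfl⟩ := ihr
    exact ⟨.node () l r, Fin.cons a (Fin.append f g), by simp [pairingWord]⟩

lemma mem_range_of_mem_pairingWord {t : BinaryTree Unit} {f : Fin t.numNodes → α} {a : α}
    (h : a ∈ pairingWord t f) : a ∈ Set.range f := by
  induction t with
  | nil => simp [pairingWord] at h
  | node _ l r ihl ihr =>
    simp only [pairingWord, List.mem_cons, List.mem_append] at h
    rcases h with rfl | h | rfl | h
    · exact Set.mem_range_self _
    · exact Set.range_comp_subset_range _ f (ihl h)
    · exact Set.mem_range_self _
    · exact Set.range_comp_subset_range _ f (ihr h)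

lemma apply_zero_notMem_pairingWord {n : ℕ} {f : Fin (n + 1) → α} (hf : Function.Injective f)
    (t : BinaryTree Unit) (e : Fin t.numNodes → Fin n) :
    f 0 ∉ pairingWord t fun i => f (e i).succ := fun hmem => by
  obtain ⟨i, hi⟩ := mem_range_of_mem_pairingWord hmem
  exact Fin.succ_ne_zero _ (hf hi)

lemma sigma_eq_of_pairingWord_eq {t t' : BinaryTree Unit} {f : Fin t.numNodes → α}
    {f' : Fin t'.numNodes → α} (hf : Function.Injective f) (hf' : Function.Injective f')
    (h : pairingWord t f = pairingWord t' f') :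
    (⟨t, f⟩ : Σ t : BinaryTree Unit, Fin t.numNodes → α) = ⟨t', f'⟩ := by
  induction t generalizing t' with
  | nil =>
    cases t' with
    | nil => exact congrArg _ (funext fun i => i.elim0)
    | node => simp [pairingWord] at h
  | node _ l r ihl ihr =>
    cases t' with
    | nil => simp [pairingWord] at h
    | node _ l' r' =>
      simp only [pairingWord, List.cons.injEq] at h
      obtain ⟨h0, h⟩ := h
      rw [← h0, List.append_cons_inj_of_notMem (apply_zero_notMem_pairingWord hf l _)
        (apply_zero_notMem_pairingWord hf r _)] at h
      have hleft (l r : BinaryTree Unit) :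
          Function.Injective fun i : Fin l.numNodes => (i.castAdd r.numNodes).succ :=
        (Fin.succ_injective _).comp (Fin.castAdd_injective _ _)
      have hright (l r : BinaryTree Unit) :
          Function.Injective fun i : Fin r.numNodes => (i.natAdd l.numNodes).succ :=
        (Fin.succ_injective _).comp (Fin.natAdd_injective _ _)
      obtain ⟨rfl, hfl⟩ :=
        Sigma.mk.inj_iff.1 (ihl (hf.comp (hleft l r)) (hf'.comp (hleft l' r')) h.1)
      obtain ⟨rfl, hfr⟩ :=
        Sigma.mk.inj_iff.1 (ihr (hf.comp (hright l r)) (hf'.comp (hright l r')) h.2.2)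
      refine congrArg _ (funext fun i => ?_)
      induction i using Fin.cases with
      | zero => exact h0
      | succ i =>
        induction i using Fin.addCases with
        | left i => exact congrFun (eq_of_heq hfl) i
        | right i => exact congrFun (eq_of_heq hfr) i

lemma finite_setOf_length_eq_and [Finite α] (k : ℕ) (p : List α → Prop) :
    {w : List α | w.length = k ∧ p w}.Finite :=
  (List.finite_length_eq α k).subset fun _ hw => hw.1

lemma card_setOf_ofFn (k : ℕ) (p : List α → Prop) :
    Nat.card {i : Fin k → α // p (List.ofFn i)} = {w : List α | w.length = k ∧ p w}.ncard := by
  have himage :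
      {w : List α | w.length = k ∧ p w} = List.ofFn '' {i : Fin k → α | p (List.ofFn i)} := by
    ext w
    constructor
    · rintro ⟨rfl, hw⟩
      exact ⟨w.get, by simpa using hw, List.ofFn_get w⟩
    · rintro ⟨i, hi, rfl⟩
      exact ⟨List.length_ofFn, hi⟩
  rw [himage, Set.ncard_image_of_injective _ List.ofFn_injective]
  rfl

variable [Fintype α]

lemma ncard_isNoncrossing_le (n : ℕ) :
    {w : List α | w.length = 2 * n ∧ IsNoncrossing w}.ncard ≤
      catalan n * Fintype.card α ^ n := by
  classical
  let T : Finset (Σ t : BinaryTree Unit, Fin t.numNodes → α) :=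
    (BinaryTree.treesOfNumNodesEq n).sigma fun _ => Finset.univ
  have hsub : {w : List α | w.length = 2 * n ∧ IsNoncrossing w} ⊆
      T.image fun p => pairingWord p.1 p.2 := by
    rintro w ⟨hlen, hw⟩
    obtain ⟨t, f, rfl⟩ := hw.exists_pairingWord_eq
    rw [length_pairingWord] at hlen
    have ht : t.numNodes = n := by lia
    exact Finset.mem_image.2 ⟨⟨t, f⟩, by simp [T, ht], rfl⟩
  calc {w : List α | w.length = 2 * n ∧ IsNoncrossing w}.ncard
      ≤ (T.image fun p => pairingWord p.1 p.2).card :=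
        (Set.ncard_le_ncard hsub).trans_eq (Set.ncard_coe_finset _)
    _ ≤ T.card := Finset.card_image_le
    _ = ∑ t ∈ BinaryTree.treesOfNumNodesEq n, Fintype.card α ^ t.numNodes := by
        simp [T]
    _ = ∑ _t ∈ BinaryTree.treesOfNumNodesEq n, Fintype.card α ^ n :=
        Finset.sum_congr rfl fun t ht => by rw [BinaryTree.mem_treesOfNumNodesEq.1 ht]
    _ = catalan n * Fintype.card α ^ n := by
        simp [BinaryTree.treesOfNumNodesEq_card_eq_catalan]

lemma catalan_mul_descFactorial_le_ncard_isNoncrossing (n : ℕ) :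
    catalan n * (Fintype.card α).descFactorial n ≤
      {w : List α | w.length = 2 * n ∧ IsNoncrossing w}.ncard := by
  classical
  let T : Finset (Σ t : BinaryTree Unit, Fin t.numNodes ↪ α) :=
    (BinaryTree.treesOfNumNodesEq n).sigma fun _ => Finset.univ
  have hinj : Function.Injective
      fun p : Σ t : BinaryTree Unit, Fin t.numNodes ↪ α => pairingWord p.1 p.2 := by
    rintro ⟨t, f⟩ ⟨t', f'⟩ h
    obtain ⟨rfl, hff'⟩ := Sigma.mk.inj_iff.1 (sigma_eq_of_pairingWord_eq f.injective f'.injective h)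
    rw [DFunLike.coe_injective (eq_of_heq hff')]
  have hsub : (T.image fun p => pairingWord p.1 p.2 : Set (List α)) ⊆
      {w | w.length = 2 * n ∧ IsNoncrossing w} := by
    simp only [Finset.coe_image, Set.image_subset_iff]
    rintro ⟨t, f⟩ ht
    have ht : t.numNodes = n := by simpa [T] using ht
    exact ⟨by rw [length_pairingWord, ht], isNoncrossing_pairingWord t f⟩
  calc catalan n * (Fintype.card α).descFactorial n
      = ∑ _t ∈ BinaryTree.treesOfNumNodesEq n, (Fintype.card α).descFactorial n := by
        simp [BinaryTree.treesOfNumNodesEq_card_eq_catalan]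
    _ = ∑ t ∈ BinaryTree.treesOfNumNodesEq n, (Fintype.card α).descFactorial t.numNodes :=
        Finset.sum_congr rfl fun t ht => by rw [BinaryTree.mem_treesOfNumNodesEq.1 ht]
    _ = T.card := by simp [T, Fintype.card_embedding_eq]
    _ = (T.image fun p => pairingWord p.1 p.2).card := (Finset.card_image_of_injective _ hinj).symm
    _ = (T.image fun p => pairingWord p.1 p.2 : Set (List α)).ncard := (Set.ncard_coe_finset _).symm
    _ ≤ _ := Set.ncard_le_ncard hsub (finite_setOf_length_eq_and _ _)

-- A word with at most `d` distinct letters factors through the alphabet `Fin d`.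
lemma ncard_card_toFinset_le [DecidableEq α] [Nonempty α] (k d : ℕ) :
    {w : List α | w.length = k ∧ w.toFinset.card ≤ d}.ncard ≤ d ^ k * Fintype.card α ^ d := by
  let F : (Fin k → Fin d) × (Fin d → α) → List α := fun p => List.ofFn (p.2 ∘ p.1)
  have hsub : {w : List α | w.length = k ∧ w.toFinset.card ≤ d} ⊆ Finset.univ.image F := by
    rintro w ⟨rfl, hcard⟩
    obtain ⟨e⟩ : Nonempty (w.toFinset ↪ Fin d) :=
      Function.Embedding.nonempty_of_card_le (by rwa [Fintype.card_coe, Fintype.card_fin])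
    let c : Fin w.length → w.toFinset := fun j => ⟨w.get j, by simp⟩
    refine Finset.mem_image.2
      ⟨(e ∘ c, Function.extend e Subtype.val fun _ => Classical.arbitrary α), Finset.mem_univ _, ?_⟩
    have hc : Function.extend e Subtype.val (fun _ => Classical.arbitrary α) ∘ e ∘ c = w.get := by
      ext j
      exact e.injective.extend_apply _ _ _
    simp only [F, hc, List.ofFn_get]
  calc {w : List α | w.length = k ∧ w.toFinset.card ≤ d}.ncard
      ≤ (Finset.univ.image F).card :=
        (Set.ncard_le_ncard hsub).trans_eq (Set.ncard_coe_finset _)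
    _ ≤ Fintype.card ((Fin k → Fin d) × (Fin d → α)) := Finset.card_image_le
    _ = d ^ k * Fintype.card α ^ d := by simp

end Counting

section Asymptotics

lemma sqrt_natCast_pow_two_mul (N n : ℕ) : √(N : ℝ) ^ (2 * n) = (N : ℝ) ^ n := by
  rw [pow_mul, Real.sq_sqrt N.cast_nonneg]

lemma tendsto_descFactorial_div_pow (n : ℕ) :
    Tendsto (fun N : ℕ => (N.descFactorial n : ℝ) / (N : ℝ) ^ n) atTop (𝓝 1) := by
  refine (Asymptotics.isEquivalent_iff_tendsto_one ?_).1 (isEquivalent_descFactorial n)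
  filter_upwards [eventually_gt_atTop 0] with N hN
  positivity

lemma tendsto_ncard_isNoncrossing_div (k : ℕ) :
    Tendsto
      (fun N : ℕ => ({w : List (Fin N) | w.length = k ∧ IsNoncrossing w}.ncard : ℝ) / √N ^ k) atTop
      (𝓝 (if Even k then (catalan (k / 2) : ℝ) else 0)) := by
  split_ifs with hk
  · obtain ⟨n, rfl⟩ := hk.exists_two_nsmul
    simp only [smul_eq_mul, sqrt_natCast_pow_two_mul, Nat.mul_div_cancel_left n two_pos]
    have hlower := (tendsto_descFactorial_div_pow n).const_mul (catalan n : ℝ)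
    rw [mul_one] at hlower
    refine tendsto_of_tendsto_of_tendsto_of_le_of_le' hlower tendsto_const_nhds ?_ ?_
    · filter_upwards with N
      rw [← mul_div_assoc]
      gcongr
      exact_mod_cast Fintype.card_fin N ▸
        catalan_mul_descFactorial_le_ncard_isNoncrossing (α := Fin N) n
    · filter_upwards [eventually_gt_atTop 0] with N hN
      rw [div_le_iff₀ (by positivity)]
      exact_mod_cast Fintype.card_fin N ▸ ncard_isNoncrossing_le (α := Fin N) n
  · have hempty (N : ℕ) : {w : List (Fin N) | w.length = k ∧ IsNoncrossing w} = ∅ := by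
      refine Set.eq_empty_of_forall_notMem fun w ⟨hlen, hw⟩ => hk ?_
      obtain ⟨t, f, rfl⟩ := hw.exists_pairingWord_eq
      rw [← hlen, length_pairingWord]
      exact even_two_mul _
    simp [hempty]

lemma tendsto_ncard_card_toFinset_le_div {d k : ℕ} (h : 2 * d < k) :
    Tendsto
      (fun N : ℕ => ({w : List (Fin N) | w.length = k ∧ w.toFinset.card ≤ d}.ncard : ℝ) / √N ^ k)
      atTop (𝓝 0) := by
  have hpow : Tendsto (fun N : ℕ => (d : ℝ) ^ k * (√(N : ℝ) ^ (2 * d) / √(N : ℝ) ^ k)) atTop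
      (𝓝 ((d : ℝ) ^ k * 0)) :=
    ((tendsto_pow_div_pow_atTop_zero h).comp
      (Real.tendsto_sqrt_atTop.comp tendsto_natCast_atTop_atTop)).const_mul _
  rw [mul_zero] at hpow
  refine squeeze_zero' (.of_forall fun N => by positivity) ?_ hpow
  filter_upwards [eventually_gt_atTop 0] with N hN
  have : Nonempty (Fin N) := ⟨⟨0, hN⟩⟩
  rw [← mul_div_assoc, sqrt_natCast_pow_two_mul]
  gcongr
  exact_mod_cast Fintype.card_fin N ▸ ncard_card_toFinset_le (α := Fin N) k d

lemma tendsto_ncard_two_mul_card_toFinset_lt_div (k : ℕ) :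
    Tendsto
      (fun N : ℕ =>
        ({w : List (Fin N) | w.length = k ∧ 2 * w.toFinset.card < k}.ncard : ℝ) / √N ^ k)
      atTop (𝓝 0) := by
  rcases Nat.eq_zero_or_pos k with rfl | hk
  · simp
  have hiff (c : ℕ) : 2 * c < k ↔ c ≤ (k - 1) / 2 := by lia
  simp only [hiff]
  exact tendsto_ncard_card_toFinset_le_div (by lia)

end Asymptotics

section Moments

variable {α S W : Type*} [Finite α] [Group W] {M : CoxeterMatrix S} (cs : CoxeterSystem M W)

lemma ncard_isNoncrossing_le_ncard_wordProd_eq_one (s : α → S) (k : ℕ) :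
    {w : List α | w.length = k ∧ IsNoncrossing w}.ncard ≤
      {w : List α | w.length = k ∧ cs.wordProd (w.map s) = 1}.ncard :=
  Set.ncard_le_ncard (fun _ hw => ⟨hw.1, (hw.2.map s).wordProd_eq_one cs⟩)
    (finite_setOf_length_eq_and _ _)

lemma ncard_wordProd_eq_one_le [DecidableEq α] {s : α → S} (hs : Function.Injective s)
    (hM : ∀ i j, i ≠ j → M (s i) (s j) ≠ 2) (k : ℕ) :
    {w : List α | w.length = k ∧ cs.wordProd (w.map s) = 1}.ncard ≤
      {w : List α | w.length = k ∧ IsNoncrossing w}.ncard +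
        {w : List α | w.length = k ∧ 2 * w.toFinset.card < k}.ncard := by
  classical
  refine (Set.ncard_le_ncard ?_ ((finite_setOf_length_eq_and _ _).union
    (finite_setOf_length_eq_and _ _))).trans (Set.ncard_union_le _ _)
  rintro w ⟨rfl, hw⟩
  have hpairwise : {a | a ∈ w.map s}.Pairwise fun a b => M a b ≠ 2 := by
    intro a ha b hb hab
    obtain ⟨i, -, rfl⟩ := List.mem_map.1 ha
    obtain ⟨j, -, rfl⟩ := List.mem_map.1 hb
    exact hM i j (ne_of_apply_ne s hab)
  have hcard : (w.map s).toFinset.card = w.toFinset.card := by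
    rw [← Finset.card_image_of_injective _ hs]
    congr 1
    ext
    simp
  have hcases := isNoncrossing_or_two_mul_card_toFinset_lt_length cs hw hpairwise
  rw [hcard, List.length_map] at hcases
  exact hcases.imp (fun h => ⟨rfl, h.of_map hs⟩) fun h => ⟨rfl, h⟩

end Moments

end CoxeterCLT

open CoxeterCLT in
theorem coxeter_clt_general {S W : Type*} [Group W] (M : CoxeterMatrix S)
    (cs : CoxeterSystem M W) (s : ℕ → S) (hs : Function.Injective s)
    (hM : ∀ i j : ℕ, i ≠ j → M (s i) (s j) ≠ 2) (k : ℕ) :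
    Tendsto
      (fun N : ℕ =>
        (Nat.card {i : Fin k → Fin N //
            cs.wordProd (List.ofFn fun j => s ((i j : ℕ))) = 1} : ℝ) / (Real.sqrt N) ^ k)
      atTop
      (𝓝 (if Even k then (catalan (k / 2) : ℝ) else 0)) := by
  have hcard (N : ℕ) : Nat.card {i : Fin k → Fin N //
        cs.wordProd (List.ofFn fun j => s ((i j : ℕ))) = 1} =
      {w : List (Fin N) | w.length = k ∧ cs.wordProd (w.map (s ∘ Fin.val)) = 1}.ncard := by
    simp only [← card_setOf_ofFn, List.map_ofFn]
    rfl
  have hupper := (tendsto_ncard_isNoncrossing_div k).add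
    (tendsto_ncard_two_mul_card_toFinset_lt_div k)
  rw [add_zero] at hupper
  simp only [hcard]
  refine tendsto_of_tendsto_of_tendsto_of_le_of_le (tendsto_ncard_isNoncrossing_div k) hupper
    (fun N => ?_) fun N => ?_
  · exact div_le_div_of_nonneg_right (Nat.cast_le.2 <|
      ncard_isNoncrossing_le_ncard_wordProd_eq_one cs (s ∘ Fin.val) k) (by positivity)
  · rw [← add_div, ← Nat.cast_add]
    exact div_le_div_of_nonneg_right (Nat.cast_le.2 <|
      ncard_wordProd_eq_one_le cs (hs.comp Fin.val_injective)
        (fun i j hij => hM i j (Fin.val_ne_of_ne hij)) k) (by positivity)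

/-- **Central limit theorem for Coxeter systems of large type.**
Let `M` be a Coxeter matrix on a countably infinite type `S` with `M s t ≥ 3` or `M s t = 0`
(encoding `∞`) for all `s ≠ t`, let `(W, cs)` be the associated Coxeter system, and fix an
injective enumeration `s : ℕ → S` of the generators.  Then for every `k`, the normalized moment
`N^(-k/2) · #{(i₁, …, i_k) ∈ {0,…,N-1}^k : s i₁ ⋯ s i_k = 1}` converges, as `N → ∞`, to `0` if
`k` is odd and to the Catalan number `C_n` if `k = 2n` is even. -/
theorem coxeter_clt {S : Type*} [Countable S] [Infinite S]
    (M : CoxeterMatrix S) (hM : ∀ s t : S, s ≠ t → M s t = 0 ∨ 3 ≤ M s t)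
    {W : Type*} [Group W] (cs : CoxeterSystem M W)
    (s : ℕ → S) (hs : Function.Injective s) (k : ℕ) :
    Tendsto
      (fun N : ℕ =>
        (Nat.card {i : Fin k → Fin N //
            cs.wordProd (List.ofFn fun j => s ((i j : ℕ))) = 1} : ℝ) / (Real.sqrt N) ^ k)
      atTop
      (𝓝 (if Even k then (catalan (k / 2) : ℝ) else 0)) := by
  refine coxeter_clt_general M cs s hs (fun i j hij => ?_) k
  have := hM (s i) (s j) (hs.ne hij)
  lia
end

section
/- Let M be an arbitrary Coxeter matrix on a type S with associated Coxeter system (W, cs). Let (w_1, …, w_r) be a word in S that defines a pair partition, and suppose there exist indices i < k < j < l and s, t ∈ S with s = w_i = w_j and t = w_k = w_l (so the pair partition contains this crossing). If cs.simple w_1 · … · cs.simple w_r = 1 in W, then M s t = 2. -/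
/-!
The letter `s` occurs exactly twice, so the word reads `a s b s c` with `s` absent from `a`, `b`
and `c`. Let `J` consist of all letters but `s`, and let `x` be the product of `b`; then `x` and
`s x s = (c a)⁻¹` both lie in the standard parabolic subgroup `W_J`. The heart of the proof is the
inclusion `W_J ∩ s W_J s ⊆ W_K` with `K = {u ∈ J | M s u = 2}`. For this, let `u` be a right descent
of `x`. By the exchange condition, the reflection `u` occurs in the right inversion sequence of
every word for `x`; comparing a word in `J` with `s η s`, where `η` is a word in `J` for `s x s`,
gives `u ∈ W_J` and `s u s ∈ W_J`. In the geometric representation the second membership forces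
`cos (π / M s u) = 0`, and one continues with `x u`. Finally, `t` occurs exactly once in `b`, so if
`t` were not in `K`, then `x ∈ W_K` would express the simple reflection `t` through the others.
-/

section Trigonometry

open Polynomial.Chebyshev Real

theorem cos_pi_div_natCast_eq_zero_iff {m : ℕ} : cos (π / m) = 0 ↔ m = 2 := by
  refine ⟨fun h => ?_, by rintro rfl; exact_mod_cast cos_pi_div_two⟩
  obtain ⟨k, hk⟩ := cos_eq_zero_iff.1 h
  rcases eq_or_ne m 0 with rfl | hm
  · simp at h
  have hmul : (2 * k + 1) * (m : ℤ) = 2 := by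
    field_simp at hk
    rw [mul_comm]
    exact_mod_cast hk.symm
  have hdvd : m ∣ 2 := by exact_mod_cast Dvd.intro_left _ hmul
  rcases (Nat.dvd_prime Nat.prime_two).1 hdvd with rfl | rfl
  · omega
  · rfl

theorem chebyshev_S_eval_eq_zero {φ : ℝ} {n : ℤ} (hsin : sin φ ≠ 0) (hn : n * φ = π) :
    (S ℝ (n - 1)).eval (2 * cos φ) = 0 := by
  have h := S_two_mul_real_cos φ (n - 1)
  rw [Int.cast_sub, Int.cast_one, sub_add_cancel, hn, sin_pi] at h
  exact (mul_eq_zero.1 h).resolve_right hsin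

theorem chebyshev_S_eval_add_eq_zero {φ : ℝ} {n : ℤ} (hsin : sin φ ≠ 0)
    (hn : (2 * n + 1) * φ = 2 * π) :
    (S ℝ n).eval (2 * cos φ) + (S ℝ (n - 1)).eval (2 * cos φ) = 0 := by
  have h₁ := S_two_mul_real_cos φ n
  have h₂ := S_two_mul_real_cos φ (n - 1)
  have hangle : (n + 1) * φ = 2 * π - n * φ := by linear_combination hn
  rw [hangle, sin_two_pi_sub] at h₁
  rw [Int.cast_sub, Int.cast_one, sub_add_cancel] at h₂
  refine (mul_eq_zero.1 ?_).resolve_right hsin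
  rw [add_mul, h₁, h₂, neg_add_cancel]

end Trigonometry

section Reflections

open Module Real

theorem reflection_mul_reflection_sq_eq_one {R V : Type*} [CommRing R] [AddCommGroup V]
    [Module R V] {x y : V} {f g : Dual R V} (hf : f x = 2) (hg : g y = 2) (hfy : f y = 0)
    (hgx : g x = 0) : (reflection hf * reflection hg) ^ 2 = 1 := by
  ext v
  simp only [pow_two, LinearEquiv.mul_apply, reflection_apply, map_sub, map_smul, hf, hg, hfy, hgx,
    LinearEquiv.coe_one, id]
  module

theorem reflection_mul_reflection_pow_eq_one {V : Type*} [AddCommGroup V] [Module ℝ V] {x y : V}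
    {f g : Dual ℝ V} (hf : f x = 2) (hg : g y = 2) {m : ℕ} (hm : 3 ≤ m)
    (hfg : f y * g x = 4 * cos (π / m) ^ 2) : (reflection hf * reflection hg) ^ m = 1 := by
  set φ : ℝ := 2 * (π / m) with hφ
  have hm3 : (3 : ℝ) ≤ m := by exact_mod_cast hm
  have hmφ : m * φ = 2 * π := by rw [hφ]; field_simp
  have hsin : sin φ ≠ 0 := by
    refine (sin_pos_of_pos_of_lt_pi (by positivity) ?_).ne'
    nlinarith [pi_pos]
  have ht : 2 * cos φ = f y * g x - 2 := by rw [hfg, hφ, cos_two_mul]; ring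
  ext v
  rw [reflection_mul_reflection_pow_apply hf hg m v _ ht]
  obtain ⟨n, hn | hn⟩ := Nat.even_or_odd' m
  · have hS := chebyshev_S_eval_eq_zero (n := n) hsin (by
      rw [hn] at hmφ; push_cast at hmφ ⊢; linarith)
    rw [show ((m : ℤ) - 2) / 2 = n - 1 by omega, show ((m : ℤ) - 1) / 2 = n - 1 by omega, hS]
    simp
  · have hS := chebyshev_S_eval_add_eq_zero (n := n) hsin (by
      rw [hn] at hmφ; push_cast at hmφ ⊢; linarith)
    rw [show ((m : ℤ) - 2) / 2 = n - 1 by omega, show ((m : ℤ) - 1) / 2 = n by omega,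
      show ((m : ℤ) - 3) / 2 = n - 1 by omega, show (m : ℤ) / 2 = n by omega, hS]
    simp

end Reflections

section GeometricRepresentation

variable {S : Type*} (M : CoxeterMatrix S)

/-- The entry `-2 cos (π / m(s, t))` of the Cartan matrix of a Coxeter matrix. For `m(s, t) = ∞`,
encoded as `0`, the convention `π / 0 = 0` gives the desired value `-2`. -/
noncomputable def cartanEntry (s t : S) : ℝ := -2 * Real.cos (Real.pi / M s t)

theorem cartanEntry_comm (s t : S) : cartanEntry M s t = cartanEntry M t s := by
  rw [cartanEntry, cartanEntry, M.symmetric s t]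

theorem cartanEntry_self (s : S) : cartanEntry M s s = 2 := by
  simp [cartanEntry]

theorem cartanEntry_eq_zero_iff {s t : S} : cartanEntry M s t = 0 ↔ M s t = 2 := by
  rw [cartanEntry, mul_eq_zero_iff_left (by norm_num), cos_pi_div_natCast_eq_zero_iff]

/-- The simple root `α_s`, a basis vector of the space of the geometric representation. -/
noncomputable def simpleRoot (s : S) : S →₀ ℝ := Finsupp.single s 1

/-- The simple coroot of `s`: the linear form with value `-2 cos (π / m(s, t))` at `α_t`. -/
noncomputable def simpleCoroot (s : S) : Module.Dual ℝ (S →₀ ℝ) :=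
  Finsupp.linearCombination ℝ (cartanEntry M s)

theorem simpleCoroot_simpleRoot (s t : S) :
    simpleCoroot M s (simpleRoot t) = cartanEntry M s t := by
  simp [simpleCoroot, simpleRoot]

theorem simpleCoroot_simpleRoot_self (s : S) : simpleCoroot M s (simpleRoot s) = 2 := by
  rw [simpleCoroot_simpleRoot, cartanEntry_self]

/-- The linear reflection by which the generator `s` acts in the geometric representation. -/
noncomputable def simpleReflection (s : S) : (S →₀ ℝ) ≃ₗ[ℝ] (S →₀ ℝ) :=
  Module.reflection (simpleCoroot_simpleRoot_self M s)

theorem simpleReflection_apply (s : S) (v : S →₀ ℝ) :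
    simpleReflection M s v = v - simpleCoroot M s v • simpleRoot s :=
  Module.reflection_apply _ _

theorem simpleReflection_apply_of_ne {s u : S} (h : s ≠ u) (v : S →₀ ℝ) :
    simpleReflection M u v s = v s := by
  simp [simpleReflection_apply, simpleRoot, h]

theorem simpleReflection_simpleRoot (s t : S) :
    simpleReflection M s (simpleRoot t) = simpleRoot t - cartanEntry M s t • simpleRoot s := by
  rw [simpleReflection_apply, simpleCoroot_simpleRoot]

theorem simpleReflection_simpleRoot_self (s : S) :
    simpleReflection M s (simpleRoot s) = -simpleRoot s :=
  Module.reflection_apply_self _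

theorem isLiftable_simpleReflection : M.IsLiftable (simpleReflection M) := by
  intro s t
  rcases eq_or_ne s t with rfl | hst
  · rw [M.diagonal, pow_one]
    exact LinearEquiv.ext (Module.involutive_reflection (simpleCoroot_simpleRoot_self M s))
  have hne_one : M s t ≠ 1 := M.off_diagonal s t hst
  obtain hzero | htwo | hthree : M s t = 0 ∨ M s t = 2 ∨ 3 ≤ M s t := by omega
  · rw [hzero, pow_zero]
  · have hentry : cartanEntry M s t = 0 := (cartanEntry_eq_zero_iff M).2 htwo
    rw [htwo]
    apply reflection_mul_reflection_sq_eq_one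
    · rwa [simpleCoroot_simpleRoot]
    · rwa [simpleCoroot_simpleRoot, cartanEntry_comm]
  · apply reflection_mul_reflection_pow_eq_one _ _ hthree
    rw [simpleCoroot_simpleRoot, simpleCoroot_simpleRoot, cartanEntry_comm M t s, cartanEntry]
    ring

variable {M} {W : Type*} [Group W] (cs : CoxeterSystem M W)

/-- The geometric (Tits) representation of a Coxeter group on the space spanned by the simple
roots. -/
noncomputable def geometricRep : W →* ((S →₀ ℝ) ≃ₗ[ℝ] (S →₀ ℝ)) :=
  cs.lift ⟨simpleReflection M, isLiftable_simpleReflection M⟩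

theorem geometricRep_simple (s : S) : geometricRep cs (cs.simple s) = simpleReflection M s :=
  cs.lift_apply_simple (isLiftable_simpleReflection M) s

end GeometricRepresentation

section Parabolic

variable {S : Type*} {M : CoxeterMatrix S} {W : Type*} [Group W] (cs : CoxeterSystem M W)

/-- The standard parabolic subgroup `W_J` generated by the simple reflections in `J`. -/
def parabolic (J : Set S) : Subgroup W := Subgroup.closure (cs.simple '' J)

variable {cs} {J : Set S}

theorem parabolic_mono {K : Set S} (h : J ⊆ K) : parabolic cs J ≤ parabolic cs K :=
  Subgroup.closure_mono (Set.image_mono h)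

theorem simple_mem_parabolic {s : S} (hs : s ∈ J) : cs.simple s ∈ parabolic cs J :=
  Subgroup.subset_closure (Set.mem_image_of_mem _ hs)

theorem wordProd_mem_parabolic {ω : List S} (hω : ∀ u ∈ ω, u ∈ J) :
    cs.wordProd ω ∈ parabolic cs J :=
  list_prod_mem (by simpa using fun u hu => simple_mem_parabolic (hω u hu))

theorem exists_wordProd_eq_of_mem_parabolic {x : W} (hx : x ∈ parabolic cs J) :
    ∃ ω : List S, (∀ u ∈ ω, u ∈ J) ∧ cs.wordProd ω = x := by
  induction hx using Subgroup.closure_induction with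
  | mem _ h =>
    obtain ⟨u, hu, rfl⟩ := h
    exact ⟨[u], by simpa using hu, cs.wordProd_singleton u⟩
  | one => exact ⟨[], by simp, cs.wordProd_nil⟩
  | mul _ _ _ _ ihx ihy =>
    obtain ⟨ω, hω, rfl⟩ := ihx
    obtain ⟨η, hη, rfl⟩ := ihy
    exact ⟨ω ++ η, by simpa [or_imp, forall_and] using ⟨hω, hη⟩, cs.wordProd_append ω η⟩
  | inv _ _ ih =>
    obtain ⟨ω, hω, rfl⟩ := ih
    exact ⟨ω.reverse, by simpa using hω, cs.wordProd_reverse ω⟩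

theorem mem_parabolic_of_mem_rightInvSeq {ω : List S} (hω : ∀ u ∈ ω, u ∈ J) {r : W}
    (hr : r ∈ cs.rightInvSeq ω) : r ∈ parabolic cs J := by
  induction ω with
  | nil => simp at hr
  | cons u ω ih =>
    simp only [List.forall_mem_cons] at hω
    rw [CoxeterSystem.rightInvSeq, List.mem_cons] at hr
    rcases hr with rfl | hr
    · have hmem : cs.wordProd ω ∈ parabolic cs J := wordProd_mem_parabolic hω.2
      exact mul_mem (mul_mem (inv_mem hmem) (simple_mem_parabolic hω.1)) hmem
    · exact ih hω.2 hr

theorem geometricRep_apply_of_mem_parabolic {x : W} (hx : x ∈ parabolic cs J) {s : S}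
    (hs : s ∉ J) (v : S →₀ ℝ) : geometricRep cs x v s = v s := by
  induction hx using Subgroup.closure_induction generalizing v with
  | mem _ h =>
    obtain ⟨u, hu, rfl⟩ := h
    rw [geometricRep_simple, simpleReflection_apply_of_ne M (ne_of_mem_of_not_mem hu hs).symm]
  | one => rw [map_one, LinearEquiv.coe_one, id]
  | mul _ _ _ _ ihx ihy => rw [map_mul, LinearEquiv.mul_apply, ihx, ihy]
  | inv x _ ih => rw [← ih, ← LinearEquiv.mul_apply, ← map_mul, mul_inv_cancel, map_one,
      LinearEquiv.coe_one, id]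

theorem simple_mem_parabolic_iff {s : S} : cs.simple s ∈ parabolic cs J ↔ s ∈ J := by
  refine ⟨fun h => ?_, simple_mem_parabolic⟩
  by_contra hs
  have hcoord := geometricRep_apply_of_mem_parabolic h hs (simpleRoot s)
  rw [geometricRep_simple, simpleReflection_simpleRoot_self] at hcoord
  norm_num [simpleRoot] at hcoord

theorem M_eq_two_of_simple_conj_mem_parabolic {s u : S} (hs : s ∉ J) (hu : u ∈ J)
    (h : cs.simple s * cs.simple u * cs.simple s ∈ parabolic cs J) : M s u = 2 := by
  -- The `α_s`-coordinate of `s u s α_s` is `1 - (cartanEntry M s u) ^ 2`, but `W_J` preserves it.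
  have hcoord := geometricRep_apply_of_mem_parabolic h hs (simpleRoot s)
  simp only [map_mul, LinearEquiv.mul_apply, geometricRep_simple, simpleReflection_simpleRoot_self,
    simpleReflection_simpleRoot, cartanEntry_comm M u s, map_neg, map_sub, map_smul] at hcoord
  have hus : u ≠ s := ne_of_mem_of_not_mem hu hs
  exact (cartanEntry_eq_zero_iff M).1 (by simpa [simpleRoot, hus] using hcoord)

end Parabolic

section Exchange

/-- The map `(x, ε) ↦ (g x g⁻¹, ε + [x = g])`. When `g` runs over the simple reflections of a
Coxeter group, these maps generate Tits' action on signed reflections; it is convenient to let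
`x` be an arbitrary group element. -/
def signedConj {G : Type*} [Group G] [DecidableEq G] (g : G) : Function.End (G × ZMod 2) :=
  fun p => (g * p.1 * g⁻¹, p.2 + if p.1 = g then 1 else 0)

theorem mul_mul_pow_eq_inv_mul {G : Type*} [Group G] {a b : G} (ha : a * a = 1) (hb : b * b = 1)
    (k : ℕ) : b * (a * b) ^ k = ((a * b) ^ k)⁻¹ * b := by
  have hconj : b * (a * b) * b⁻¹ = (a * b)⁻¹ := by
    rw [mul_inv_rev, inv_eq_of_mul_eq_one_left ha, ← mul_assoc, mul_inv_cancel_right,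
      inv_eq_of_mul_eq_one_left hb]
  rw [← inv_pow, ← hconj, conj_pow, inv_mul_cancel_right]

theorem signedConj_mul_signedConj_pow_apply {G : Type*} [Group G] [DecidableEq G] {a b : G}
    (ha : a * a = 1) (hb : b * b = 1) (k : ℕ) (x : G) (ε : ZMod 2) :
    ((signedConj a * signedConj b) ^ k) (x, ε) = ((a * b) ^ k * x * ((a * b) ^ k)⁻¹,
      ε + ∑ n ∈ Finset.range (2 * k), if x = b * (a * b) ^ n then 1 else 0) := by
  induction k with
  | zero => simp [Function.End.one_def]
  | succ k ih =>
    set ρ := a * b with hρ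
    have hbρ : b * ρ ^ k = (ρ ^ k)⁻¹ * b := mul_mul_pow_eq_inv_mul ha hb k
    have hconj (y : G) : ρ ^ k * x * (ρ ^ k)⁻¹ = y ↔ x = (ρ ^ k)⁻¹ * y * ρ ^ k := by
      rw [mul_inv_eq_iff_eq_mul, ← eq_inv_mul_iff_mul_eq, mul_assoc]
    have heven : ρ ^ k * x * (ρ ^ k)⁻¹ = b ↔ x = b * ρ ^ (2 * k) := by
      rw [hconj, ← hbρ, two_mul, pow_add, mul_assoc]
    have hodd : b * (ρ ^ k * x * (ρ ^ k)⁻¹) * b⁻¹ = a ↔ x = b * ρ ^ (2 * k + 1) := by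
      have hbab : b⁻¹ * a * b = b * ρ := by rw [inv_eq_of_mul_eq_one_left hb, mul_assoc]
      rw [mul_inv_eq_iff_eq_mul, ← eq_inv_mul_iff_mul_eq, hconj, ← mul_assoc b⁻¹, hbab,
        ← mul_assoc, ← hbρ]
      simp only [mul_assoc, ← pow_succ', ← pow_add]
      rw [show k + (k + 1) = 2 * k + 1 by omega]
    rw [pow_succ']
    change signedConj a (signedConj b (((signedConj a * signedConj b) ^ k) (x, ε))) = _
    rw [ih]
    simp only [signedConj, heven, hodd, show 2 * (k + 1) = 2 * k + 1 + 1 by ring,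
      Finset.sum_range_succ, Prod.mk.injEq]
    refine ⟨?_, by ring⟩
    rw [pow_succ' ρ k, mul_inv_rev]
    simp only [hρ, mul_inv_rev, mul_assoc]

variable {S : Type*} {M : CoxeterMatrix S} {W : Type*} [Group W] (cs : CoxeterSystem M W)

theorem isLiftable_signedConj_simple [DecidableEq W] :
    M.IsLiftable fun s => signedConj (cs.simple s) := by
  intro s t
  funext ⟨x, ε⟩
  rw [signedConj_mul_signedConj_pow_apply (cs.simple_mul_simple_self s)
    (cs.simple_mul_simple_self t), cs.simple_mul_simple_pow, two_mul, Finset.sum_range_add]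
  simp only [pow_add, cs.simple_mul_simple_pow, one_mul, CharTwo.add_self_eq_zero]
  simp [Function.End.one_def]

/-- The action of a Coxeter group for which the simple reflection `s` acts by `signedConj s`. -/
def signedConjAction [DecidableEq W] : W →* Function.End (W × ZMod 2) :=
  cs.lift ⟨fun s => signedConj (cs.simple s), isLiftable_signedConj_simple cs⟩

theorem signedConjAction_simple [DecidableEq W] (s : S) :
    signedConjAction cs (cs.simple s) = signedConj (cs.simple s) :=
  cs.lift_apply_simple (isLiftable_signedConj_simple cs) s

theorem signedConjAction_wordProd_apply [DecidableEq W] (ω : List S) (x : W) (ε : ZMod 2) :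
    signedConjAction cs (cs.wordProd ω) (x, ε) =
      (cs.wordProd ω * x * (cs.wordProd ω)⁻¹, ε + (cs.rightInvSeq ω).count x) := by
  induction ω with
  | nil => simp [Function.End.one_def]
  | cons u ω ih =>
    have hconj : cs.wordProd ω * x * (cs.wordProd ω)⁻¹ = cs.simple u ↔
        (cs.wordProd ω)⁻¹ * cs.simple u * cs.wordProd ω = x := by
      rw [mul_inv_eq_iff_eq_mul, mul_assoc, inv_mul_eq_iff_eq_mul, eq_comm]
    rw [cs.wordProd_cons, map_mul]
    change signedConjAction cs (cs.simple u) (signedConjAction cs (cs.wordProd ω) (x, ε)) = _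
    rw [ih, signedConjAction_simple, signedConj, CoxeterSystem.rightInvSeq, List.count_cons]
    simp only [hconj, beq_iff_eq, Nat.cast_add, Nat.cast_ite, Nat.cast_one, Nat.cast_zero,
      add_assoc]
    simp only [mul_inv_rev, mul_assoc]

variable {cs}

theorem natCast_count_rightInvSeq_eq [DecidableEq W] {ω η : List S}
    (h : cs.wordProd ω = cs.wordProd η) (x : W) :
    ((cs.rightInvSeq ω).count x : ZMod 2) = (cs.rightInvSeq η).count x := by
  have hact := congrArg (fun w => (signedConjAction cs w (x, 0)).2) h
  simpa only [signedConjAction_wordProd_apply, zero_add] using hact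

theorem simple_mem_rightInvSeq_of_isRightDescent {ω : List S} {u : S}
    (h : cs.IsRightDescent (cs.wordProd ω) u) : cs.simple u ∈ cs.rightInvSeq ω := by
  classical
  obtain ⟨η, hη, hprod⟩ := cs.exists_isReduced (cs.wordProd ω * cs.simple u)
  have hword : cs.wordProd (η.concat u) = cs.wordProd ω := by
    rw [cs.wordProd_concat, ← hprod, cs.simple_mul_simple_cancel_right]
  have hreduced : cs.IsReduced (η.concat u) := by
    rw [CoxeterSystem.IsReduced, hword, List.length_concat, ← hη.eq, ← hprod,
      cs.isRightDescent_iff.1 h]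
  have hone : (cs.rightInvSeq (η.concat u)).count (cs.simple u) = 1 :=
    List.count_eq_one_of_mem hreduced.nodup_rightInvSeq (by
      rw [cs.rightInvSeq_concat, List.concat_eq_append]; simp)
  have hparity := natCast_count_rightInvSeq_eq hword (cs.simple u)
  by_contra hmem
  rw [hone, List.count_eq_zero_of_not_mem hmem] at hparity
  norm_num at hparity

end Exchange

section Crossing

variable {S : Type*} {M : CoxeterMatrix S} {W : Type*} [Group W] {cs : CoxeterSystem M W}

theorem conj_simple_mem_parabolic_of_isRightDescent {J : Set S} {s u : S} (hs : s ∉ J) {x : W}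
    (hx : x ∈ parabolic cs J) (hconj : cs.simple s * x * cs.simple s ∈ parabolic cs J)
    (hu : cs.IsRightDescent x u) (huJ : u ∈ J) :
    cs.simple s * cs.simple u * cs.simple s ∈ parabolic cs J := by
  obtain ⟨η, hη, hprod⟩ := exists_wordProd_eq_of_mem_parabolic hconj
  have hword : cs.wordProd ((s :: η).concat s) = x := by
    rw [cs.wordProd_concat, cs.wordProd_cons, hprod]
    simp [mul_assoc]
  have hmem := simple_mem_rightInvSeq_of_isRightDescent (hword ▸ hu)
  rw [cs.rightInvSeq_concat, CoxeterSystem.rightInvSeq, List.concat_eq_append, hprod] at hmem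
  have hsJ : cs.simple s ∉ parabolic cs J := simple_mem_parabolic_iff.not.2 hs
  simp only [List.map_cons, List.mem_append, List.mem_cons, List.mem_map, List.not_mem_nil,
    or_false, MulAut.conj_apply, cs.inv_simple] at hmem
  rcases hmem with (hxux | ⟨r, hr, hru⟩) | hus
  · have hsx : cs.simple s = x * cs.simple u * x⁻¹ := by
      rw [hxux]
      simp [mul_assoc]
    exact absurd (hsx ▸ mul_mem (mul_mem hx (simple_mem_parabolic huJ)) (inv_mem hx)) hsJ
  · rw [← hru]
    simpa [mul_assoc] using mem_parabolic_of_mem_rightInvSeq hη hr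
  · exact absurd (hus ▸ simple_mem_parabolic huJ) hsJ

theorem mem_parabolic_sep_of_conj_mem_parabolic {J : Set S} {s : S} (hs : s ∉ J) {x : W}
    (hx : x ∈ parabolic cs J) (hconj : cs.simple s * x * cs.simple s ∈ parabolic cs J) :
    x ∈ parabolic cs {u ∈ J | M s u = 2} := by
  induction hn : cs.length x using Nat.strong_induction_on generalizing x with
  | _ n ih =>
  rcases eq_or_ne x 1 with rfl | hne
  · exact one_mem _
  obtain ⟨u, hu⟩ := cs.exists_rightDescent_of_ne_one hne
  have huJ : u ∈ J := by
    obtain ⟨ω, hω, rfl⟩ := exists_wordProd_eq_of_mem_parabolic hx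
    exact simple_mem_parabolic_iff.1 <|
      mem_parabolic_of_mem_rightInvSeq hω (simple_mem_rightInvSeq_of_isRightDescent hu)
  have hsus := conj_simple_mem_parabolic_of_isRightDescent hs hx hconj hu huJ
  have huK : cs.simple u ∈ parabolic cs {u ∈ J | M s u = 2} :=
    simple_mem_parabolic ⟨huJ, M_eq_two_of_simple_conj_mem_parabolic hs huJ hsus⟩
  have hxu : cs.simple s * (x * cs.simple u) * cs.simple s ∈ parabolic cs J := by
    simpa [mul_assoc] using mul_mem hconj hsus
  have ih' := ih _ (hn ▸ hu) (mul_mem hx (simple_mem_parabolic huJ)) hxu rfl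
  simpa using mul_mem ih' huK

theorem M_eq_two_of_wordProd_eq_one {s t : S} {a b₁ b₂ c : List S} (ha : s ∉ a)
    (hb : s ∉ b₁ ++ t :: b₂) (hc : s ∉ c) (hb₁ : t ∉ b₁) (hb₂ : t ∉ b₂)
    (h : cs.wordProd (a ++ s :: (b₁ ++ t :: b₂ ++ s :: c)) = 1) : M s t = 2 := by
  have mem_compl {u : S} {ω : List S} (hω : u ∉ ω) : cs.wordProd ω ∈ parabolic cs {u}ᶜ :=
    wordProd_mem_parabolic fun v hv => ne_of_mem_of_not_mem hv hω
  have hconj : cs.simple s * cs.wordProd (b₁ ++ t :: b₂) * cs.simple s =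
      (cs.wordProd (c ++ a))⁻¹ := by
    rw [eq_inv_iff_mul_eq_one, cs.wordProd_append c, ← mul_assoc, mul_eq_one_comm]
    simpa only [cs.wordProd_append, cs.wordProd_cons, mul_assoc] using h
  have hmem := mem_parabolic_sep_of_conj_mem_parabolic (s := s) (by simp) (mem_compl hb)
    (hconj ▸ inv_mem (mem_compl (by simp [ha, hc])))
  by_contra hne
  have hcompl : cs.wordProd (b₁ ++ t :: b₂) ∈ parabolic cs {t}ᶜ :=
    parabolic_mono (fun u hu => by rintro rfl; exact hne hu.2) hmem
  rw [cs.wordProd_append, cs.wordProd_cons, Subgroup.mul_mem_cancel_left _ (mem_compl hb₁),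
    Subgroup.mul_mem_cancel_right _ (mem_compl hb₂)] at hcompl
  exact simple_mem_parabolic_iff.1 hcompl rfl

theorem exists_eq_append_cons_of_pairwise_lt {α : Type*} [Preorder α] {l : List α}
    (hl : l.Pairwise (· < ·)) {i : α} (hi : i ∈ l) :
    ∃ a b : List α, l = a ++ i :: b ∧ (∀ z, z ∈ a ↔ z ∈ l ∧ z < i) ∧
      ∀ z, z ∈ b ↔ z ∈ l ∧ i < z := by
  obtain ⟨a, b, rfl⟩ := List.append_of_mem hi
  simp only [List.pairwise_append, List.pairwise_cons, List.mem_cons, forall_eq_or_imp] at hl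
  obtain ⟨-, ⟨hib, -⟩, hai⟩ := hl
  refine ⟨a, b, rfl, fun z => ?_, fun z => ?_⟩ <;>
    simp only [List.mem_append, List.mem_cons] <;> grind

theorem exists_eq_append_cons_append_cons_append_cons_of_pairwise_lt {α : Type*} [Preorder α]
    {l : List α} (hl : l.Pairwise (· < ·)) {i k j : α} (hi : i ∈ l) (hk : k ∈ l) (hj : j ∈ l)
    (hik : i < k) (hkj : k < j) :
    ∃ a b₁ b₂ c : List α, l = a ++ i :: (b₁ ++ k :: b₂ ++ j :: c) ∧ (∀ z ∈ a, z < i) ∧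
      (∀ z ∈ b₁, i < z ∧ z < k) ∧ (∀ z ∈ b₂, k < z ∧ z < j) ∧ ∀ z ∈ c, j < z := by
  obtain ⟨a, l', rfl, ha, hl'⟩ := exists_eq_append_cons_of_pairwise_lt hl hi
  have hsorted : l'.Pairwise (· < ·) := (List.pairwise_cons.1 (List.pairwise_append.1 hl).2.1).2
  obtain ⟨b, c, rfl, hb, hc⟩ :=
    exists_eq_append_cons_of_pairwise_lt hsorted ((hl' j).2 ⟨hj, hik.trans hkj⟩)
  obtain ⟨b₁, b₂, rfl, hb₁, hb₂⟩ := exists_eq_append_cons_of_pairwise_lt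
    (List.pairwise_append.1 hsorted).1 ((hb k).2 ⟨(hl' k).2 ⟨hk, hik⟩, hkj⟩)
  refine ⟨a, b₁, b₂, c, rfl, fun z hz => ((ha z).1 hz).2, fun z hz => ?_, fun z hz => ?_,
    fun z hz => ((hc z).1 hz).2⟩
  · obtain ⟨hzb, hzk⟩ := (hb₁ z).1 hz
    exact ⟨((hl' z).1 ((hb z).1 hzb).1).2, hzk⟩
  · obtain ⟨hzb, hkz⟩ := (hb₂ z).1 hz
    exact ⟨hkz, ((hb z).1 hzb).2⟩

theorem M_eq_two_of_crossing_general {S : Type*} (M : CoxeterMatrix S)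
    {W : Type*} [Group W] (cs : CoxeterSystem M W)
    {r : ℕ} (w : Fin r → S) (i k j : Fin r) (hik : i < k) (hkj : k < j)
    (s t : S) (hsi : w i = s) (hsj : w j = s) (htk : w k = t)
    (hs : ∀ z, w z = s → z = i ∨ z = j) (ht : ∀ z, i < z → z < j → w z = t → z = k)
    (hprod : cs.wordProd (List.ofFn w) = 1) :
    M s t = 2 := by
  obtain ⟨a, b₁, b₂, c, hl, ha, hb₁, hb₂, hc⟩ :=
    exists_eq_append_cons_append_cons_append_cons_of_pairwise_lt (List.pairwise_lt_finRange r)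
      (List.mem_finRange i) (List.mem_finRange k) (List.mem_finRange j) hik hkj
  rw [List.ofFn_eq_map, hl] at hprod
  simp only [List.map_append, List.map_cons, hsi, hsj, htk] at hprod
  refine M_eq_two_of_wordProd_eq_one ?_ ?_ ?_ ?_ ?_ hprod <;> grind

theorem eq_or_eq_of_card_fiber_eq_two {α β : Type*} {f : α → β} {i j z : α}
    (hcard : Nat.card {z // f z = f i} = 2) (hij : i ≠ j) (hj : f j = f i) (hz : f z = f i) :
    z = i ∨ z = j := by
  obtain ⟨y, -, hy⟩ := (Nat.card_eq_two_iff' (⟨i, rfl⟩ : {z // f z = f i})).1 hcard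
  refine or_iff_not_imp_left.2 fun hzi => ?_
  have hjy := hy ⟨j, hj⟩ (by simpa using hij.symm)
  have hzy := hy ⟨z, hz⟩ (by simpa using hzi)
  exact congrArg Subtype.val (hzy.trans hjy.symm)

end Crossing

/-- Let `M` be an arbitrary Coxeter matrix on `S` with associated Coxeter system `(W, cs)`.
Let `(w₁, …, w_r)` be a word defining a pair partition, and suppose there are indices
`i < k < j < l` and `s, t ∈ S` with `s = w i = w j` and `t = w k = w l` (a crossing).
If `w₁ ⋯ w_r = 1` in `W`, then `M s t = 2`. -/
theorem M_eq_two_of_crossing {S : Type*} (M : CoxeterMatrix S)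
    {W : Type*} [Group W] (cs : CoxeterSystem M W)
    {r : ℕ} (w : Fin r → S)
    (hpair : ∀ i, Nat.card {j : Fin r // w j = w i} = 2)
    (i k j l : Fin r) (hik : i < k) (hkj : k < j) (hjl : j < l)
    (s t : S) (hsi : w i = s) (hsj : w j = s) (htk : w k = t) (htl : w l = t)
    (hprod : cs.wordProd (List.ofFn w) = 1) :
    M s t = 2 := by
  have hs (z : Fin r) (hz : w z = s) : z = i ∨ z = j :=
    eq_or_eq_of_card_fiber_eq_two (hpair i) (hik.trans hkj).ne (by rw [hsj, hsi]) (by rw [hz, hsi])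
  have ht (z : Fin r) (hzj : z < j) (hz : w z = t) : z = k :=
    (eq_or_eq_of_card_fiber_eq_two (hpair k) (hkj.trans hjl).ne (by rw [htl, htk])
      (by rw [hz, htk])).resolve_right (hzj.trans hjl).ne
  exact M_eq_two_of_crossing_general M cs w i k j hik hkj s t hsi hsj htk hs
    (fun z _ => ht z) hprod
end

section
/- Let M be an arbitrary Coxeter matrix on a type S with associated Coxeter system (W, cs). Let w = (w_1, …, w_{2r}) be a word in S defining a pair partition V of {1, …, 2r}, with blocks {e_1, f_1}, …, {e_r, f_r} where e_i < f_i and e_1 < e_2 < … < e_r, and let t_i(w) = w_{e_i} ∈ S be the label of the i-th block. Then cs.simple w_1 · … · cs.simple w_{2r} = 1 in W if and only if M (t_i(w)) (t_j(w)) = 2 for every inversion (i, j) ∈ I(V). -/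
/-!
In the geometric representation, an element of `W` written without the letter `s` maps the simple
root `α_s` to `α_s` plus a nonnegative combination of other simple roots. Suppose that the word is
trivial in `W` and that the pair of an `s` interlaces that of a `t`. Rotating the word gives a
relation `s X s = Y` between words with `s` in neither `X` nor `Y`, and with `t` exactly once in
`X`. The `t`-coordinates of `X α_s` and `Y α_s` are then opposite and nonnegative, hence zero. But
the first is at least `2 cos (π / m(s, t))`, which forces `m(s, t) = 2`.

Conversely, take the last position whose letter `s` recurs later. The letters between its two
occurrences are pairwise distinct and do not recur, so each has its partner before the first `s`.
They are thus interlaced with `s` and commute with it, and the two `s` cancel.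
-/

namespace CoxeterWords

open Real Module Polynomial
open CoxeterSystem (alternatingWord alternatingWord_succ alternatingWord_succ'
  length_alternatingWord)

section Chebyshev

open Polynomial.Chebyshev

lemma S_eval_two_mul_cos {θ : ℝ} (hθ : sin θ ≠ 0) (n : ℤ) :
    (S ℝ n).eval (2 * cos θ) = sin ((n + 1) * θ) / sin θ :=
  eq_div_of_mul_eq hθ (S_two_mul_real_cos θ n)

lemma S_eval_two_mul_cos_eq_zero {θ : ℝ} (hθ : sin θ ≠ 0) {n : ℤ} (hn : (n + 1) * θ = π) :
    (S ℝ n).eval (2 * cos θ) = 0 := by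
  rw [S_eval_two_mul_cos hθ, hn, sin_pi, zero_div]

lemma S_eval_add_S_sub_one_eval_two_mul_cos_eq_zero {θ : ℝ} (hθ : sin θ ≠ 0) {n : ℤ}
    (hn : (2 * n + 1) * θ = 2 * π) :
    (S ℝ n).eval (2 * cos θ) + (S ℝ (n - 1)).eval (2 * cos θ) = 0 := by
  have hsub : ((n - 1 : ℤ) + 1 : ℝ) * θ = 2 * π - (n + 1) * θ := by
    push_cast
    linarith
  rw [S_eval_two_mul_cos hθ, S_eval_two_mul_cos hθ, hsub, sin_two_pi_sub]
  ring

lemma S_eval_two_mul_cos_pi_div_nonneg {m k : ℕ} (hk : m = 0 ∨ k ≤ m) :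
    0 ≤ (S ℝ (k - 1)).eval (2 * cos (π / m)) := by
  rcases hk with rfl | hk
  · simp
  obtain rfl | rfl | hm : m = 0 ∨ m = 1 ∨ 2 ≤ m := by omega
  · simp
  · interval_cases k <;> simp
  have hm' : (2 : ℝ) ≤ m := by exact_mod_cast hm
  have hk' : (k : ℝ) ≤ m := by exact_mod_cast hk
  have hsin : 0 < sin (π / m) :=
    sin_pos_of_pos_of_lt_pi (by positivity) (div_lt_self pi_pos (by linarith))
  rw [S_eval_two_mul_cos hsin.ne']
  refine div_nonneg (sin_nonneg_of_nonneg_of_le_pi ?_ ?_) hsin.le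
  · push_cast
    rw [sub_add_cancel]
    positivity
  · push_cast
    rw [sub_add_cancel, mul_div_left_comm]
    exact mul_le_of_le_one_right pi_pos.le (div_le_one_of_le₀ hk' (by positivity))

end Chebyshev

section Reflection

variable {V : Type*} [AddCommGroup V]

lemma reflection_mul_reflection_sq_eq_one {R : Type*} [CommRing R] [Module R V] {x y : V}
    {f g : Dual R V} (hf : f x = 2) (hg : g y = 2) (hfy : f y = 0) (hgx : g x = 0) :
    (reflection hf * reflection hg) ^ 2 = 1 := by
  ext v
  simp only [pow_two, LinearEquiv.mul_apply, reflection_apply, map_sub, map_smul, hf, hg, hfy, hgx,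
    LinearEquiv.coe_one, id]
  module

lemma reflection_mul_reflection_pow_eq_one [Module ℝ V] {x y : V} {f g : Dual ℝ V}
    (hf : f x = 2) (hg : g y = 2) {m : ℕ} (hm : 3 ≤ m)
    (hfg : f y * g x = (2 * cos (π / m)) ^ 2) :
    (reflection hf * reflection hg) ^ m = 1 := by
  set θ := 2 * π / m with hθ
  have hm' : (3 : ℝ) ≤ m := by exact_mod_cast hm
  have hmθ : m * θ = 2 * π := mul_div_cancel₀ _ (by positivity)
  have hsin : sin θ ≠ 0 :=
    (sin_pos_of_pos_of_lt_pi (by positivity) (by nlinarith [pi_pos])).ne'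
  have htrace : 2 * cos θ = f y * g x - 2 := by
    rw [hfg, hθ, mul_div_assoc, cos_two_mul]
    ring
  ext v
  rw [reflection_mul_reflection_pow_apply hf hg m v _ htrace, LinearEquiv.coe_one, id]
  obtain ⟨n, hn | hn⟩ := Nat.even_or_odd' m
  · have hzero : (Chebyshev.S ℝ (n - 1 : ℤ)).eval (2 * cos θ) = 0 := by
      refine S_eval_two_mul_cos_eq_zero hsin ?_
      rw [hn] at hmθ
      push_cast at hmθ ⊢
      linarith
    rw [show ((m : ℤ) - 2) / 2 = n - 1 by omega, show ((m : ℤ) - 1) / 2 = n - 1 by omega, hzero]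
    simp only [zero_mul, zero_smul, add_zero]
  · have hzero : (Chebyshev.S ℝ (n : ℤ)).eval (2 * cos θ) +
        (Chebyshev.S ℝ (n - 1 : ℤ)).eval (2 * cos θ) = 0 := by
      refine S_eval_add_S_sub_one_eval_two_mul_cos_eq_zero hsin ?_
      rw [hn] at hmθ
      push_cast at hmθ ⊢
      linarith
    rw [show ((m : ℤ) - 2) / 2 = n - 1 by omega, show ((m : ℤ) - 1) / 2 = n by omega,
      show ((m : ℤ) - 3) / 2 = n - 1 by omega, show (m : ℤ) / 2 = n by omega, hzero]
    simp only [mul_zero, zero_smul, add_zero]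

end Reflection

section Cartan

variable {S : Type*} (M : CoxeterMatrix S)

/-- The Cartan matrix `2 B(α_s, α_t) = -2 cos (π / m(s, t))` of the Tits form `B`. For
`m(s, t) = ∞`, encoded as `0`, the convention `π / 0 = 0` gives the required value `-2`. -/
noncomputable def cartan (s t : S) : ℝ := -(2 * cos (π / M s t))

lemma cartan_comm (s t : S) : cartan M s t = cartan M t s := by
  rw [cartan, cartan, M.symmetric]

lemma cartan_self (s : S) : cartan M s s = 2 := by
  simp [cartan]

variable {M}

lemma cartan_eq_zero_of_eq_two {s t : S} (h : M s t = 2) : cartan M s t = 0 := by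
  simp [cartan, h]

lemma cartan_neg {s t : S} (hst : s ≠ t) (h : M s t ≠ 2) : cartan M s t < 0 := by
  have hcos : 0 < cos (π / M s t) := by
    obtain h0 | h3 : M s t = 0 ∨ 3 ≤ M s t := by
      have := M.off_diagonal s t hst
      omega
    · simp [h0]
    · have h3' : (2 : ℝ) < M s t := by exact_mod_cast h3
      refine cos_pos_of_mem_Ioo ⟨?_, div_lt_div_of_pos_left pi_pos two_pos h3'⟩
      have : 0 < π / M s t := by positivity
      linarith [pi_pos]
  rw [cartan]
  linarith

lemma cartan_nonpos {s t : S} (hst : s ≠ t) : cartan M s t ≤ 0 := by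
  by_cases h : M s t = 2
  · exact (cartan_eq_zero_of_eq_two h).le
  · exact (cartan_neg hst h).le

end Cartan

section Roots

variable {S : Type*}

/-- The simple root `α_s`, a standard basis vector of the space `S →₀ ℝ` on which the Coxeter group
acts by the geometric representation. -/
noncomputable abbrev simpleRoot (s : S) : S →₀ ℝ := Finsupp.single s 1

variable (M : CoxeterMatrix S)

/-- The simple coroot `2 B(α_s, ·)`, where `B` is the Tits form. -/
noncomputable def simpleCoroot (s : S) : Dual ℝ (S →₀ ℝ) :=
  Finsupp.linearCombination ℝ (cartan M s)

lemma simpleCoroot_single (s t : S) (c : ℝ) :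
    simpleCoroot M s (Finsupp.single t c) = c * cartan M s t := by
  simp [simpleCoroot]

lemma simpleCoroot_simpleRoot (s t : S) : simpleCoroot M s (simpleRoot t) = cartan M s t := by
  rw [simpleCoroot_single, one_mul]

lemma simpleCoroot_simpleRoot_self (s : S) : simpleCoroot M s (simpleRoot s) = 2 := by
  rw [simpleCoroot_simpleRoot, cartan_self]

lemma simpleCoroot_nonpos {s : S} {v : S →₀ ℝ} (hv : 0 ≤ v) (hvs : v s = 0) :
    simpleCoroot M s v ≤ 0 := by
  rw [simpleCoroot, Finsupp.linearCombination_apply]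
  refine Finset.sum_nonpos fun t _ ↦ ?_
  obtain rfl | hst := eq_or_ne s t
  · simp [hvs]
  · exact mul_nonpos_of_nonneg_of_nonpos (hv t) (cartan_nonpos hst)

lemma simpleCoroot_le {s t : S} (hst : s ≠ t) {v : S →₀ ℝ} (hv : 0 ≤ v) (hvs : v s = 0) :
    simpleCoroot M s v ≤ v t * cartan M s t := by
  classical
  have herase : simpleCoroot M s (v.erase t) ≤ 0 := by
    refine simpleCoroot_nonpos M (fun u ↦ ?_) (by rw [Finsupp.erase_ne hst, hvs])
    rw [Finsupp.erase_apply]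
    split_ifs
    exacts [le_rfl, hv u]
  rw [← Finsupp.erase_add_single t v, map_add, simpleCoroot_single, Finsupp.erase_add_single]
  linarith

/-- The reflection `v ↦ v - 2 B(α_s, v) α_s` by which the simple generator `s` acts. -/
noncomputable def simpleReflection (s : S) : (S →₀ ℝ) ≃ₗ[ℝ] (S →₀ ℝ) :=
  reflection (simpleCoroot_simpleRoot_self M s)

lemma isLiftable_simpleReflection : M.IsLiftable (simpleReflection M) := by
  intro s t
  unfold simpleReflection
  obtain rfl | hst := eq_or_ne s t
  · rw [M.diagonal, pow_one, mul_eq_one_iff_eq_inv, reflection_inv]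
  obtain h | h | h : M s t = 0 ∨ M s t = 2 ∨ 3 ≤ M s t := by
    have := M.off_diagonal s t hst
    omega
  · rw [h, pow_zero]
  · rw [h]
    apply reflection_mul_reflection_sq_eq_one
    · rw [simpleCoroot_simpleRoot, cartan_eq_zero_of_eq_two h]
    · rw [simpleCoroot_simpleRoot, cartan_comm, cartan_eq_zero_of_eq_two h]
  · apply reflection_mul_reflection_pow_eq_one _ _ h
    rw [simpleCoroot_simpleRoot, simpleCoroot_simpleRoot, cartan_comm M t s, cartan]
    ring

end Roots

section Representation

variable {S : Type*} {M : CoxeterMatrix S} {W : Type*} [Group W] (cs : CoxeterSystem M W)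

/-- The geometric (Tits) representation of the Coxeter group `W`. -/
noncomputable def geomRep : W →* ((S →₀ ℝ) ≃ₗ[ℝ] (S →₀ ℝ)) :=
  cs.lift ⟨simpleReflection M, isLiftable_simpleReflection M⟩

lemma geomRep_simple (s : S) (v : S →₀ ℝ) :
    geomRep cs (cs.simple s) v = v - simpleCoroot M s v • simpleRoot s := by
  rw [geomRep, cs.lift_apply_simple, simpleReflection, reflection_apply]

lemma geomRep_mul (x y : W) (v : S →₀ ℝ) :
    geomRep cs (x * y) v = geomRep cs x (geomRep cs y v) := by
  rw [map_mul, LinearEquiv.mul_apply]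

lemma geomRep_simple_simpleRoot (s t : S) :
    geomRep cs (cs.simple s) (simpleRoot t) = simpleRoot t - cartan M s t • simpleRoot s := by
  rw [geomRep_simple, simpleCoroot_simpleRoot]

lemma geomRep_simple_simpleRoot_self (s : S) :
    geomRep cs (cs.simple s) (simpleRoot s) = -simpleRoot s := by
  rw [geomRep_simple_simpleRoot, cartan_self]
  module

lemma geomRep_simple_apply_of_ne {s t : S} (hst : s ≠ t) (v : S →₀ ℝ) :
    geomRep cs (cs.simple s) v t = v t := by
  simp [geomRep_simple, hst]

lemma geomRep_wordProd_apply_of_notMem {s : S} {L : List S} (hs : s ∉ L) (v : S →₀ ℝ) :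
    geomRep cs (cs.wordProd L) v s = v s := by
  induction L with
  | nil => simp
  | cons t L ih =>
    rw [List.mem_cons, not_or] at hs
    rw [cs.wordProd_cons, geomRep_mul, geomRep_simple_apply_of_ne cs (Ne.symm hs.1),
      ih hs.2]

lemma geomRep_alternatingWord_simpleRoot (s t : S) (k : ℕ) :
    geomRep cs (cs.wordProd (alternatingWord s t k)) (simpleRoot s) =
      (Chebyshev.S ℝ k).eval (-cartan M s t) • simpleRoot (if Even k then s else t) +
      (Chebyshev.S ℝ (k - 1)).eval (-cartan M s t) •
        simpleRoot (if Even k then t else s) := by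
  induction k with
  | zero => simp [alternatingWord]
  | succ k ih =>
    rw [alternatingWord_succ', cs.wordProd_cons, geomRep_mul, ih]
    simp only [Nat.cast_add_one, add_sub_cancel_right, Chebyshev.S_add_one, eval_sub,
      eval_mul, eval_X, map_add, map_smul, Nat.even_add_one]
    by_cases hk : Even k
    · simp only [hk, if_true, not_true, if_false, geomRep_simple_simpleRoot_self,
        geomRep_simple_simpleRoot, cartan_comm M t s]
      module
    · simp only [hk, if_true, not_false_eq_true, if_false, geomRep_simple_simpleRoot_self,
        geomRep_simple_simpleRoot]
      module

end Representation

section Length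

variable {S : Type*} {M : CoxeterMatrix S} {W : Type*} [Group W] (cs : CoxeterSystem M W)

lemma isReduced_of_length_mul_wordProd {v : W} {L : List S}
    (h : cs.length (v * cs.wordProd L) = cs.length v + L.length) : cs.IsReduced L := by
  have hle := cs.length_mul_le v (cs.wordProd L)
  exact (cs.length_wordProd_le L).antisymm (by omega)

lemma eq_zero_or_lt_of_length_mul_alternatingWord {s t : S} {v : W} {k : ℕ}
    (h : cs.length (v * cs.wordProd (alternatingWord s t k)) = cs.length v + k)
    (hs : ¬cs.IsRightDescent (v * cs.wordProd (alternatingWord s t k)) s) :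
    M s t = 0 ∨ k < M s t := by
  have hred : cs.IsReduced (alternatingWord t s (k + 1)) := by
    apply isReduced_of_length_mul_wordProd cs (v := v)
    rw [cs.not_isRightDescent_iff] at hs
    rw [alternatingWord_succ, cs.wordProd_concat, ← mul_assoc, hs, h,
      List.length_concat, length_alternatingWord, add_assoc]
  rw [M.symmetric]
  by_contra! hlt
  exact cs.not_isReduced_alternatingWord t s hlt.1 (Nat.lt_succ_of_le hlt.2) hred

lemma exists_eq_mul_alternatingWord {w : W} {s t : S} (hs : ¬cs.IsRightDescent w s)
    (ht : cs.IsRightDescent w t) :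
    ∃ (v : W) (k : ℕ), w = v * cs.wordProd (alternatingWord s t k) ∧
      cs.length v < cs.length w ∧ ¬cs.IsRightDescent v s ∧ ¬cs.IsRightDescent v t ∧
      (M s t = 0 ∨ k < M s t) := by
  obtain ⟨v, ⟨k, rfl, hlen⟩, hmin⟩ := exists_minimalFor_of_wellFoundedLT
    (fun v ↦ ∃ k, w = v * cs.wordProd (alternatingWord s t k) ∧
      cs.length w = cs.length v + k) cs.length ⟨w, 0, by simp [alternatingWord]⟩
  have hnext : ¬cs.IsRightDescent v (if Even k then t else s) := by
    intro hdesc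
    rw [cs.isRightDescent_iff] at hdesc
    have hword : v * cs.wordProd (alternatingWord s t k) =
        v * cs.simple (if Even k then t else s) *
          cs.wordProd (alternatingWord s t (k + 1)) := by
      rw [alternatingWord_succ', cs.wordProd_cons, mul_assoc, cs.simple_mul_simple_cancel_left]
    have hle := hmin ⟨k + 1, hword, by omega⟩
    omega
  obtain _ | j := k
  · exact absurd ht (by simpa [alternatingWord] using hnext)
  have hprev : ¬cs.IsRightDescent v (if Even j then t else s) := by
    intro hdesc
    rw [cs.isRightDescent_iff] at hdesc
    rw [alternatingWord_succ', cs.wordProd_cons, ← mul_assoc] at hlen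
    have hmul := cs.length_mul_le (v * cs.simple (if Even j then t else s))
      (cs.wordProd (alternatingWord s t j))
    have hword := cs.length_wordProd_le (alternatingWord s t j)
    rw [length_alternatingWord] at hword
    omega
  refine ⟨v, j + 1, rfl, by omega, ?_, ?_, eq_zero_or_lt_of_length_mul_alternatingWord cs hlen hs⟩
  all_goals by_cases hj : Even j <;> simp_all [Nat.even_add_one]

end Length

section Positivity

variable {S : Type*} {M : CoxeterMatrix S} {W : Type*} [Group W] (cs : CoxeterSystem M W)

theorem geomRep_simpleRoot_nonneg {w : W} {s : S} (hs : ¬cs.IsRightDescent w s) :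
    0 ≤ geomRep cs w (simpleRoot s) := by
  induction hn : cs.length w using Nat.strong_induction_on generalizing w s with
  | _ n ih =>
  obtain rfl | hw := eq_or_ne w 1
  · simp
  obtain ⟨t, ht⟩ := cs.exists_rightDescent_of_ne_one hw
  -- Splitting off the dihedral factor generated by `s` and a right descent `t` of `w` leaves a
  -- shorter element that has neither `s` nor `t` as a right descent.
  obtain ⟨v, k, rfl, hlt, hvs, hvt, hk⟩ := exists_eq_mul_alternatingWord cs hs ht
  have hv_s := ih _ (hn ▸ hlt) hvs rfl
  have hv_t := ih _ (hn ▸ hlt) hvt rfl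
  have hcoeff (j : ℕ) (hj : j ≤ k + 1) :
      0 ≤ (Chebyshev.S ℝ (j - 1)).eval (-cartan M s t) := by
    rw [cartan, neg_neg]
    exact S_eval_two_mul_cos_pi_div_nonneg (by omega)
  have hcoeff_succ := hcoeff (k + 1) le_rfl
  rw [Nat.cast_add_one, add_sub_cancel_right] at hcoeff_succ
  rw [geomRep_mul, geomRep_alternatingWord_simpleRoot, map_add, map_smul, map_smul]
  refine add_nonneg (smul_nonneg hcoeff_succ ?_) (smul_nonneg (hcoeff k k.le_succ) ?_)
  all_goals split_ifs <;> assumption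

lemma geomRep_wordProd_simpleRoot_nonneg {s : S} {L : List S} (hs : s ∉ L) :
    0 ≤ geomRep cs (cs.wordProd L) (simpleRoot s) := by
  by_cases hdesc : cs.IsRightDescent (cs.wordProd L) s
  · rw [cs.isRightDescent_iff_not_isRightDescent_mul] at hdesc
    have hneg := geomRep_simpleRoot_nonneg cs hdesc s
    rw [geomRep_mul, geomRep_simple_simpleRoot_self, map_neg, Finsupp.neg_apply,
      geomRep_wordProd_apply_of_notMem cs hs, Finsupp.single_eq_same] at hneg
    norm_num at hneg
  · exact geomRep_simpleRoot_nonneg cs hdesc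

variable [DecidableEq S]

lemma neg_cartan_le_geomRep_wordProd_apply {s t : S} {L : List S} (hs : s ∉ L)
    (ht : L.count t = 1) :
    -cartan M s t ≤ geomRep cs (cs.wordProd L) (simpleRoot s) t := by
  obtain ⟨Q, R, rfl, htQ⟩ :=
    List.eq_append_cons_of_mem (List.count_pos_iff.mp (ht ▸ Nat.one_pos))
  have htR : t ∉ R := by
    rw [List.count_append, List.count_cons_self] at ht
    exact List.count_eq_zero.mp (by omega)
  obtain ⟨-, hst, hsR⟩ : s ∉ Q ∧ s ≠ t ∧ s ∉ R := by simpa using hs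
  have hvt : geomRep cs (cs.wordProd R) (simpleRoot s) t = 0 := by
    rw [geomRep_wordProd_apply_of_notMem cs htR, Finsupp.single_eq_of_ne hst.symm]
  have hcoroot := simpleCoroot_le M hst.symm (geomRep_wordProd_simpleRoot_nonneg cs hsR) hvt
  rw [geomRep_wordProd_apply_of_notMem cs hsR, Finsupp.single_eq_same, one_mul] at hcoroot
  rw [cs.wordProd_append, cs.wordProd_cons, geomRep_mul, geomRep_wordProd_apply_of_notMem cs htQ,
    geomRep_mul, geomRep_simple, Finsupp.sub_apply, hvt, Finsupp.smul_apply,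
    Finsupp.single_eq_same, smul_eq_mul, mul_one, cartan_comm]
  linarith

theorem eq_two_of_simple_mul_wordProd_mul_simple {s t : S} {X Y : List S} (hsX : s ∉ X)
    (hsY : s ∉ Y) (htX : X.count t = 1)
    (h : cs.simple s * cs.wordProd X * cs.simple s = cs.wordProd Y) : M s t = 2 := by
  have hst : s ≠ t := by
    rintro rfl
    rw [List.count_eq_zero_of_not_mem hsX] at htX
    exact zero_ne_one htX
  have hY : 0 ≤ geomRep cs (cs.wordProd Y) (simpleRoot s) t :=
    geomRep_wordProd_simpleRoot_nonneg cs hsY t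
  have hX := neg_cartan_le_geomRep_wordProd_apply cs hsX htX
  rw [← h, geomRep_mul, geomRep_simple_simpleRoot_self, geomRep_mul,
    geomRep_simple_apply_of_ne cs hst, map_neg, Finsupp.neg_apply] at hY
  by_contra hM
  linarith [cartan_neg hst hM]

end Positivity

section Commutation

variable {S : Type*} {M : CoxeterMatrix S} {W : Type*} [Group W] (cs : CoxeterSystem M W)

lemma commute_simple_simple {s t : S} (h : M s t = 2) : Commute (cs.simple s) (cs.simple t) := by
  have hsq := cs.simple_mul_simple_pow s t
  rw [h, pow_two] at hsq
  calc cs.simple s * cs.simple t = (cs.simple s * cs.simple t)⁻¹ := eq_inv_of_mul_eq_one_left hsq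
    _ = cs.simple t * cs.simple s := by rw [mul_inv_rev, cs.inv_simple, cs.inv_simple]

lemma commute_simple_wordProd {s : S} {L : List S} (h : ∀ t ∈ L, M s t = 2) :
    Commute (cs.simple s) (cs.wordProd L) :=
  Commute.list_prod_right _ _ <|
    List.forall_mem_map.mpr fun t ht ↦ commute_simple_simple cs (h t ht)

lemma wordProd_append_cons_append_cons {s : S} {A : List S} (h : ∀ t ∈ A, M s t = 2)
    (P Q : List S) :
    cs.wordProd (P ++ s :: (A ++ s :: Q)) = cs.wordProd (P ++ (A ++ Q)) := by
  simp only [cs.wordProd_append, cs.wordProd_cons]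
  rw [(commute_simple_wordProd cs h).left_comm, cs.simple_mul_simple_cancel_left]

end Commutation

section PairWord

variable {S : Type*}

lemma exists_eq_append_cons_of_not_nodup {L : List S} (h : ¬L.Nodup) :
    ∃ P s T, L = P ++ s :: T ∧ T.Nodup ∧ s ∈ T := by
  induction L with
  | nil => exact absurd List.nodup_nil h
  | cons s L ih =>
    by_cases hL : L.Nodup
    · exact ⟨[], s, L, rfl, hL, by simpa [hL] using h⟩
    · obtain ⟨P, t, T, rfl, hT⟩ := ih hL
      exact ⟨s :: P, t, T, rfl, hT⟩

variable [DecidableEq S]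

/-- A word defining a pair partition of its set of positions: each letter that occurs does so
exactly twice. -/
def IsPairWord (L : List S) : Prop := ∀ s ∈ L, L.count s = 2

lemma exists_eq_append_cons_append_cons {s t : S} {L : List S} (h : [s, t, s, t].Sublist L)
    (hs : L.count s = 2) (ht : L.count t = 2) :
    ∃ P X Q : List S, L = P ++ s :: (X ++ s :: Q) ∧ s ∉ P ∧ s ∉ X ∧ s ∉ Q ∧ X.count t = 1 := by
  have hst : s ≠ t := by
    rintro rfl
    simpa [hs] using h.count_le s
  obtain ⟨A, L, rfl, hA, h⟩ := List.cons_sublist_iff.mp h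
  obtain ⟨B, L, rfl, hB, h⟩ := List.cons_sublist_iff.mp h
  obtain ⟨C, D, rfl, hC, hD⟩ := List.cons_sublist_iff.mp h
  obtain ⟨A, A', rfl⟩ := List.append_of_mem hA
  obtain ⟨C, C', rfl⟩ := List.append_of_mem hC
  have hB := List.count_pos_iff.mpr hB
  have hD := List.count_pos_iff.mpr (List.singleton_sublist.mp hD)
  simp only [List.count_append, List.count_cons_self, List.count_cons_of_ne hst] at hs ht
  refine ⟨A, A' ++ B ++ C, C' ++ D, by simp, ?_⟩
  simp only [← List.count_eq_zero, List.count_append]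
  omega

lemma IsPairWord.eq_nil_of_nodup {L : List S} (hL : IsPairWord L) (h : L.Nodup) : L = [] := by
  refine List.eq_nil_iff_forall_not_mem.mpr fun s hs ↦ ?_
  have := List.nodup_iff_count_le_one.mp h s
  rw [hL s hs] at this
  omega

lemma IsPairWord.erase_pair {P A Q : List S} {s : S}
    (hL : IsPairWord (P ++ s :: (A ++ s :: Q))) : IsPairWord (P ++ (A ++ Q)) := by
  intro t ht
  have hs := hL s (by simp)
  have ht' := hL t (by simp only [List.mem_append, List.mem_cons] at ht ⊢; tauto)
  have hpos := List.count_pos_iff.mpr ht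
  simp only [List.count_append, List.count_cons_self] at hs ht' hpos ⊢
  have hst : s ≠ t := by
    rintro rfl
    omega
  simpa only [List.count_cons_of_ne hst, List.count_append] using ht'

lemma IsPairWord.sublist_of_mem {P A Q : List S} {s t : S}
    (hL : IsPairWord (P ++ s :: (A ++ s :: Q))) (hA : (A ++ s :: Q).Nodup) (ht : t ∈ A) :
    [t, s, t, s].Sublist (P ++ s :: (A ++ s :: Q)) := by
  have hst : s ≠ t := by
    rintro rfl
    exact List.disjoint_of_nodup_append hA ht List.mem_cons_self
  have htP : t ∈ P := by
    have hcount := hL t (by simp [ht])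
    have hA_count := List.count_eq_one_of_mem hA (List.mem_append_left _ ht)
    rw [List.count_append, List.count_cons_of_ne hst] at hcount
    exact List.count_pos_iff.mp (by omega)
  have htail : [t, s].Sublist (A ++ s :: Q) :=
    (List.singleton_sublist.mpr ht).append ((List.nil_sublist Q).cons_cons s)
  exact (List.singleton_sublist.mpr htP).append (htail.cons_cons s)

variable {M : CoxeterMatrix S} {W : Type*} [Group W] (cs : CoxeterSystem M W)

theorem eq_two_of_wordProd_eq_one {s t : S} {L : List S} (hL : cs.wordProd L = 1)
    (h : [s, t, s, t].Sublist L) (hs : L.count s = 2) (ht : L.count t = 2) : M s t = 2 := by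
  obtain ⟨P, X, Q, rfl, hP, hX, hQ, hXt⟩ := exists_eq_append_cons_append_cons h hs ht
  refine eq_two_of_simple_mul_wordProd_mul_simple cs (Y := (Q ++ P).reverse) hX
    (by simp [hP, hQ]) hXt ?_
  rw [cs.wordProd_reverse, eq_inv_iff_mul_eq_one, cs.wordProd_append]
  simp only [cs.wordProd_append, cs.wordProd_cons] at hL
  rw [mul_eq_one_comm] at hL
  simpa only [mul_assoc] using hL

theorem IsPairWord.wordProd_eq_one {L : List S} (hL : IsPairWord L)
    (h : ∀ s t, [s, t, s, t].Sublist L → M s t = 2) : cs.wordProd L = 1 := by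
  induction hn : L.length using Nat.strong_induction_on generalizing L with
  | _ n ih =>
  by_cases hnodup : L.Nodup
  · rw [hL.eq_nil_of_nodup hnodup, cs.wordProd_nil]
  obtain ⟨P, s, T, rfl, hT, hsT⟩ := exists_eq_append_cons_of_not_nodup hnodup
  obtain ⟨A, Q, rfl⟩ := List.append_of_mem hsT
  have hcomm : ∀ t ∈ A, M s t = 2 := fun t ht ↦ by
    rw [M.symmetric]
    exact h t s (hL.sublist_of_mem hT ht)
  have hsub : (P ++ (A ++ Q)).Sublist (P ++ s :: (A ++ s :: Q)) :=
    (((List.sublist_cons_self s Q).append_left A).cons s).append_left P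
  rw [wordProd_append_cons_append_cons cs hcomm]
  exact ih _ (by simp [← hn]) hL.erase_pair (fun t u htu ↦ h t u (htu.trans hsub)) rfl

theorem IsPairWord.wordProd_eq_one_iff {L : List S} (hL : IsPairWord L) :
    cs.wordProd L = 1 ↔ ∀ s t, [s, t, s, t].Sublist L → M s t = 2 :=
  ⟨fun h s t hst ↦ eq_two_of_wordProd_eq_one cs h hst (hL s (hst.subset (by simp)))
    (hL t (hst.subset (by simp))), hL.wordProd_eq_one cs⟩

end PairWord

section FinIndexed

variable {α : Type*} {n : ℕ} {w : Fin n → α}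

lemma count_ofFn [DecidableEq α] (w : Fin n → α) (a : α) :
    (List.ofFn w).count a = Nat.card {i // w i = a} := by
  rw [Nat.card_eq_fintype_card, Fintype.card_subtype]
  simpa using (Fin.card_filter_univ_eq_vector_get_eq_count a (List.Vector.ofFn w)).symm

lemma isPairWord_ofFn [DecidableEq α] (h : ∀ i, Nat.card {j // w j = w i} = 2) :
    IsPairWord (List.ofFn w) :=
  List.forall_mem_ofFn_iff.mpr fun i ↦ (count_ofFn w (w i)).trans (h i)

lemma sublist_ofFn_iff {l : List α} :
    l.Sublist (List.ofFn w) ↔ ∃ f : Fin l.length ↪o Fin n, ∀ p, l.get p = w (f p) := by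
  let e : Fin (List.ofFn w).length ≃o Fin n := Fin.castOrderIso List.length_ofFn
  rw [List.sublist_iff_exists_fin_orderEmbedding_get_eq]
  constructor
  · rintro ⟨f, hf⟩
    exact ⟨f.trans e.toOrderEmbedding, fun p ↦ (hf p).trans (List.get_ofFn w _)⟩
  · rintro ⟨f, hf⟩
    exact ⟨f.trans e.symm.toOrderEmbedding, fun p ↦ by
      rw [hf, List.get_ofFn]
      rfl⟩

lemma quadruple_sublist_ofFn_iff {a b c d : α} :
    [a, b, c, d].Sublist (List.ofFn w) ↔
      ∃ i k j l, i < k ∧ k < j ∧ j < l ∧ w i = a ∧ w k = b ∧ w j = c ∧ w l = d := by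
  rw [sublist_ofFn_iff]
  constructor
  · rintro ⟨f, hf⟩
    have hmono {p q : Fin 4} (hpq : p < q) : f p < f q := f.strictMono hpq
    exact ⟨_, _, _, _, hmono (by decide : 0 < 1), hmono (by decide : 1 < 2),
      hmono (by decide : 2 < 3), (hf 0).symm, (hf 1).symm, (hf 2).symm, (hf 3).symm⟩
  · rintro ⟨i, k, j, l, hik, hkj, hjl, rfl, rfl, rfl, rfl⟩
    have hmono : StrictMono ![i, k, j, l] := by
      simp [Fin.strictMono_iff_lt_succ, Fin.forall_fin_succ, hik, hkj, hjl]
    refine ⟨OrderEmbedding.ofStrictMono _ hmono, fun p ↦ ?_⟩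
    fin_cases p <;> rfl

end FinIndexed

end CoxeterWords

/-- Let `M` be an arbitrary Coxeter matrix on `S` with associated Coxeter system `(W, cs)`, and
let `w = (w₁, …, w_{2r})` be a word defining a pair partition `V`.  Then `w₁ ⋯ w_{2r} = 1` in
`W` if and only if `M (t_i) (t_j) = 2` for every inversion `(i, j) ∈ I(V)`; an inversion of `V`
is exactly a quadruple of indices `i < k < j < l` with `w i = w j` (the block with smaller left
endpoint, labelled `t_i = w i`) and `w k = w l` (the other block, labelled `t_j = w k`). -/
theorem wordProd_eq_one_iff_inversions {S : Type*} (M : CoxeterMatrix S)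
    {W : Type*} [Group W] (cs : CoxeterSystem M W)
    {r : ℕ} (w : Fin (2 * r) → S)
    (hpair : ∀ i, Nat.card {j : Fin (2 * r) // w j = w i} = 2) :
    cs.wordProd (List.ofFn w) = 1 ↔
      ∀ i k j l : Fin (2 * r), i < k → k < j → j < l →
        w i = w j → w k = w l → M (w i) (w k) = 2 := by
  classical
  rw [(CoxeterWords.isPairWord_ofFn hpair).wordProd_eq_one_iff cs]
  constructor
  · intro h i k j l hik hkj hjl hij hkl
    exact h _ _ (CoxeterWords.quadruple_sublist_ofFn_iff.mpr
      ⟨i, k, j, l, hik, hkj, hjl, rfl, rfl, hij.symm, hkl.symm⟩)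
  · intro h s t hst
    obtain ⟨i, k, j, l, hik, hkj, hjl, rfl, rfl, hj, hl⟩ :=
      CoxeterWords.quadruple_sublist_ofFn_iff.mp hst
    exact h i k j l hik hkj hjl hj.symm hl.symm
end
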